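/- Let M be a connected multigraph with m = ‖M‖ edges and let G be a graph on n = |V(G)| vertices. If the family L(M,G) of maximum M-subdivisions in G is pairwise intersecting and n ≥ m^6 (with m^3 < n), then τ(M,G) ≤ 5·n^{2/3}. -/

import Mathlib

open SimpleGraph

/-- A multigraph with vertex type `W` and edge type `F`: each edge has an
unordered pair of endpoints (possibly equal, giving a loop). -/
structure Multigraph (W : Type*) (F : Type*) where
  ends : F → Sym2 W

namespace Multigraph

variable {W F : Type*}

/-- Adjacency in a multigraph. -/
def Adj (M : Multigraph W F) (u v : W) : Prop :=
  ∃ e : F, M.ends e = s(u, v)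

/-- A multigraph is connected if it is nonempty and any two vertices are joined by a walk. -/
def Connected (M : Multigraph W F) : Prop :=
  Nonempty W ∧ ∀ u v : W, Relation.ReflTransGen M.Adj u v

/-- Delete the edge `e` from the multigraph `M`. -/
def deleteEdge (M : Multigraph W F) (e : F) : Multigraph W {f : F // f ≠ e} where
  ends f := M.ends f.1

/-- An edge of a (connected) multigraph is a cut-edge if deleting it disconnects
the multigraph. -/
def IsCutEdge (M : Multigraph W F) (e : F) : Prop :=
  ¬ (M.deleteEdge e).Connected

end Multigraph

variable {V W F : Type*}

/-- `Q` is (the subgraph realizing) an `M`-subdivision inside the simple graph `G`: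
there is an injective placement `b` of the branch vertices of `M`, and for each edge
`e` of `M` with ends `u e`, `v e` a path (a cycle, if `e` is a loop) of `G` joining
`b (u e)` to `b (v e)`; these paths are internally disjoint from each other and from
the branch vertices, are pairwise edge-disjoint, and their union is exactly `Q`. -/
def IsSubdivisionIn (M : Multigraph W F) (G : SimpleGraph V) (Q : G.Subgraph) : Prop :=
  ∃ (b : W → V) (u v : F → W) (P : ∀ e : F, G.Walk (b (u e)) (b (v e))),
    Function.Injective b ∧
    (∀ e, M.ends e = s(u e, v e)) ∧
    (∀ e, ∀ h : u e = v e, ((P e).copy rfl (congrArg b h.symm)).IsCycle) ∧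
    (∀ e, u e ≠ v e → (P e).IsPath) ∧
    (∀ e, ∀ x ∈ (P e).support, x ∈ Set.range b → x = b (u e) ∨ x = b (v e)) ∧
    (∀ e e', e ≠ e' → ∀ x, x ∈ (P e).support → x ∈ (P e').support → x ∈ Set.range b) ∧
    (∀ e e', e ≠ e' → ∀ a, a ∈ (P e).edges → a ∉ (P e').edges) ∧
    Q.verts = Set.range b ∪ ⋃ e, {x | x ∈ (P e).support} ∧
    (∀ x y, Q.Adj x y ↔ ∃ e, (P e).toSubgraph.Adj x y)

/-- `Q` is a maximum `M`-subdivision among those contained in the subgraph `H` of `G`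
(maximum with respect to the number of edges). -/
def IsMaxSubdivisionIn (M : Multigraph W F) (G : SimpleGraph V) (H Q : G.Subgraph) : Prop :=
  IsSubdivisionIn M G Q ∧ Q ≤ H ∧
    ∀ R : G.Subgraph, IsSubdivisionIn M G R → R ≤ H →
      R.edgeSet.ncard ≤ Q.edgeSet.ncard

/-- The family `L(M,H)` of maximum `M`-subdivisions in `H` is pairwise intersecting. -/
def PairwiseIntersectingIn (M : Multigraph W F) (G : SimpleGraph V) (H : G.Subgraph) : Prop :=
  ∀ Q R : G.Subgraph, IsMaxSubdivisionIn M G H Q → IsMaxSubdivisionIn M G H R →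
    (Q.verts ∩ R.verts).Nonempty

/-- `S` is a transversal of the family `L(M,H)` of maximum `M`-subdivisions in `H`. -/
def IsTransversalIn (M : Multigraph W F) (G : SimpleGraph V) (H : G.Subgraph)
    (S : Set V) : Prop :=
  ∀ Q : G.Subgraph, IsMaxSubdivisionIn M G H Q → (S ∩ Q.verts).Nonempty

/-- `(X, Y)` is an `H`-pretransversal: `Y ⊆ X ⊆ V(H)`, `n^{1/3}·|Y| ≤ |X|`
(where `n = |V(G)|`), and every maximum `M`-subdivision `Q` in `H` satisfies
`Q ⊆ H − X` or `Q ∩ Y ≠ ∅`. -/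
def IsPretransversal [Fintype V] (M : Multigraph W F) (G : SimpleGraph V)
    (H : G.Subgraph) (X Y : Set V) : Prop :=
  Y ⊆ X ∧ X ⊆ H.verts ∧
    (Fintype.card V : ℝ) ^ ((1 : ℝ) / 3) * (Y.ncard : ℝ) ≤ (X.ncard : ℝ) ∧
    ∀ Q : G.Subgraph, IsMaxSubdivisionIn M G H Q →
      Q ≤ H.deleteVerts X ∨ (Q.verts ∩ Y).Nonempty

/-- An `A,B`-connector of size `k` inside the subgraph `H` of `G`: `k` pairwise
vertex-disjoint paths of `H`, each meeting `A` exactly in its first vertex and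
meeting `B` exactly in its last vertex. -/
def IsConnector (G : SimpleGraph V) (H : G.Subgraph) (A B : Set V) (k : ℕ) : Prop :=
  ∃ (a : Fin k → V) (b : Fin k → V) (p : ∀ i : Fin k, G.Walk (a i) (b i)),
    (∀ i, (p i).IsPath) ∧
    (∀ i, (p i).toSubgraph ≤ H) ∧
    (∀ i, {x | x ∈ (p i).support} ∩ A = {a i}) ∧
    (∀ i, {x | x ∈ (p i).support} ∩ B = {b i}) ∧
    (∀ i j, i ≠ j → ∀ x, x ∈ (p i).support → x ∉ (p j).support)

/-!
Put `t = max (n ^ (1 / 3)) m`. The vertex sets of the maximum `M`-subdivisions are connected and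
pairwise intersecting. Hence, if a set `Y` separates `A` from `B`, then all members avoiding `Y`
avoid `A`, or all of them avoid `B`. Call a cycle long if its length is at least `2 t²`.

* If no cycle is long, let a depth-first search always descend into the component containing some
  member not yet met. The vertices of the search path attached to this component lie on a stretch
  of length less than `2 t²`, and at some stage they meet, together with the next vertex of the
  search, every member.
* If the shortest long cycle `C` is longer than `4 t²`, then distances along `C` are distances in
  `G`. Some sphere `Y` around a vertex of `C` is therefore small and separates two large parts of
  `C`, so that the members avoiding `Y` all avoid a set `A` of at least `t |Y|` vertices.
* Otherwise `C` has length between `2 t²` and `4 t²`. Either `C` meets every member, or some member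
  `R` avoids `C`. By maximality, two vertices of a segment of length less than `ℓ` on a path of `R`
  are not joined by a detour of length at least `ℓ`. For `ℓ` just above `t²`, two disjoint paths
  from the segment to `C` would give such a detour through the longer arc of `C`, so by Menger's
  theorem a single vertex separates the segment from `C`. Thus at most `2 t` vertices separate `R`,
  which meets every member, from `C`: either they meet every member, or the members avoiding them
  all avoid the `2 t²` or more vertices of `C`.

Peeling off such pairs `(A, Y)` costs at most `n / t ≤ t²` vertices in total, and what is left is
met by `4 t²` vertices.
-/

/-! ### Reachability inside a set of vertices -/

section Reachability

variable {V : Type*} {G G' : SimpleGraph V} {D D' : Set V} {a b x : V}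

/-- `b` is reachable from `a` by a walk of `G` all of whose vertices lie in `D`. -/
def ReachableIn (G : SimpleGraph V) (D : Set V) (a b : V) : Prop :=
  ∃ p : G.Walk a b, ∀ z ∈ p.support, z ∈ D

namespace ReachableIn

theorem refl (ha : a ∈ D) : ReachableIn G D a a :=
  ⟨Walk.nil, by simpa using ha⟩

theorem symm (h : ReachableIn G D a b) : ReachableIn G D b a := by
  obtain ⟨p, hp⟩ := h
  exact ⟨p.reverse, by simpa using hp⟩

theorem trans (h : ReachableIn G D a x) (h' : ReachableIn G D x b) : ReachableIn G D a b := by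
  obtain ⟨p, hp⟩ := h
  obtain ⟨q, hq⟩ := h'
  exact ⟨p.append q, fun z hz => ((Walk.mem_support_append_iff _ _).1 hz).elim (hp z) (hq z)⟩

theorem of_adj (h : G.Adj a b) (ha : a ∈ D) (hb : b ∈ D) : ReachableIn G D a b :=
  ⟨h.toWalk, by simp [ha, hb]⟩

theorem mono (hG : G ≤ G') (hD : D ⊆ D') (h : ReachableIn G D a b) : ReachableIn G' D' a b := by
  obtain ⟨p, hp⟩ := h
  exact ⟨p.mapLe hG, fun z hz => hD (hp z (by simpa using hz))⟩

theorem left_mem (h : ReachableIn G D a b) : a ∈ D := by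
  obtain ⟨p, hp⟩ := h
  exact hp a p.start_mem_support

theorem right_mem (h : ReachableIn G D a b) : b ∈ D :=
  h.symm.left_mem

theorem of_mem_support {p : G.Walk a b} (hp : ∀ z ∈ p.support, z ∈ D) (hx : x ∈ p.support) :
    ReachableIn G D a x := by
  classical
  exact ⟨p.takeUntil x hx, fun z hz => hp z (p.support_takeUntil_subset_support hx hz)⟩

theorem or_diff_singleton (h : ReachableIn G D a b) (w : V) :
    ReachableIn G D a w ∨ ReachableIn G (D \ {w}) a b := by
  obtain ⟨p, hp⟩ := h
  by_cases hw : w ∈ p.support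
  · exact .inl (of_mem_support hp hw)
  · exact .inr ⟨p, fun z hz => ⟨hp z hz, fun hzw => hw (hzw ▸ hz)⟩⟩

theorem exists_adj_mem_notMem (h : ReachableIn G D a b) {S : Set V} (ha : a ∈ S) (hb : b ∉ S) :
    ∃ x y, G.Adj x y ∧ ReachableIn G D a x ∧ x ∈ S ∧ y ∈ D ∧ y ∉ S := by
  obtain ⟨p, hp⟩ := h
  obtain ⟨d, hd, hx, hy⟩ := p.exists_boundary_dart S ha hb
  exact ⟨d.fst, d.snd, d.adj, of_mem_support hp (p.dart_fst_mem_support_of_mem_darts hd), hx,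
    hp _ (p.dart_snd_mem_support_of_mem_darts hd), hy⟩

theorem deleteEdge (h : ReachableIn G D a b) (x y : V) :
    ReachableIn (G.deleteEdges {s(x, y)}) D a b ∨
      (ReachableIn (G.deleteEdges {s(x, y)}) D a x ∧
        ReachableIn (G.deleteEdges {s(x, y)}) D y b) ∨
      (ReachableIn (G.deleteEdges {s(x, y)}) D a y ∧
        ReachableIn (G.deleteEdges {s(x, y)}) D x b) := by
  obtain ⟨p, hp⟩ := h
  induction p with
  | nil => exact .inl (refl (hp _ (by simp)))
  | @cons a c b hac p ih =>
    have ha : a ∈ D := hp a (by simp)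
    have hc : c ∈ D := hp c (by simp)
    specialize ih fun z hz => hp z (by simp [hz])
    by_cases he : s(a, c) = s(x, y)
    · rcases Sym2.eq_iff.1 he with ⟨rfl, rfl⟩ | ⟨rfl, rfl⟩
      · rcases ih with h | ⟨-, h⟩ | ⟨-, h⟩
        exacts [.inr (.inl ⟨refl ha, h⟩), .inr (.inl ⟨refl ha, h⟩), .inl h]
      · rcases ih with h | ⟨-, h⟩ | ⟨-, h⟩
        exacts [.inr (.inr ⟨refl ha, h⟩), .inl h, .inr (.inr ⟨refl ha, h⟩)]
    · have hac' : ReachableIn (G.deleteEdges {s(x, y)}) D a c :=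
        of_adj (by simpa only [deleteEdges_adj, Set.mem_singleton_iff] using ⟨hac, he⟩) ha hc
      exact ih.imp hac'.trans (.imp (.imp_left hac'.trans) (.imp_left hac'.trans))

theorem exists_subset_forall_reachableIn_diff (h : ReachableIn G D a b) :
    ∃ E ⊆ D, ReachableIn G E a b ∧ ∀ z ∈ E, z ≠ b → ReachableIn G (D \ {b}) a z := by
  classical
  obtain ⟨p, hp⟩ := h
  refine ⟨{z | z ∈ p.bypass.support}, fun z hz => hp z (p.support_bypass_subset_support hz),
    ⟨p.bypass, fun _ => id⟩, fun z hz hzb => ⟨p.bypass.takeUntil z hz, fun y hy => ⟨?_, ?_⟩⟩⟩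
  · exact hp y (p.support_bypass_subset_support
      (p.bypass.support_takeUntil_subset_support hz hy))
  · rintro rfl
    exact Walk.endpoint_notMem_support_takeUntil p.bypass_isPath hz hzb.symm hy

end ReachableIn

theorem preconnected_induce_iff_reachableIn :
    (G.induce D).Preconnected ↔ ∀ x ∈ D, ∀ y ∈ D, ReachableIn G D x y := by
  constructor
  · intro h x hx y hy
    obtain ⟨p⟩ := h ⟨x, hx⟩ ⟨y, hy⟩
    refine ⟨p.map (Embedding.induce D).toHom, fun z hz => ?_⟩
    obtain ⟨z', -, rfl⟩ := List.mem_map.1 (p.support_map _ ▸ hz)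
    exact z'.2
  · rintro h ⟨x, hx⟩ ⟨y, hy⟩
    obtain ⟨p, hp⟩ := h x hx y hy
    exact ⟨p.induce D hp⟩

/-- The component of `a` in the subgraph of `G` induced on `D` (empty if `a ∉ D`). -/
def componentIn (G : SimpleGraph V) (D : Set V) (a : V) : Set V :=
  {b | ReachableIn G D a b}

end Reachability

/-! ### Menger's theorem for two paths -/

section Menger

variable {V : Type*} {G G' : SimpleGraph V} {A B D D' : Set V} {x y w : V}

/-- Some walk of `G` inside `D` leads from `A` to `B`; thus `Y` separates `A` from `B` if and only
if `¬ LinkedIn G Yᶜ A B`. -/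
def LinkedIn (G : SimpleGraph V) (D A B : Set V) : Prop :=
  ∃ a ∈ A, ∃ b ∈ B, ReachableIn G D a b

theorem LinkedIn.symm (h : LinkedIn G D A B) : LinkedIn G D B A := by
  obtain ⟨a, ha, b, hb, h⟩ := h
  exact ⟨b, hb, a, ha, h.symm⟩

theorem LinkedIn.mono (hG : G ≤ G') (hD : D ⊆ D') (h : LinkedIn G D A B) :
    LinkedIn G' D' A B := by
  obtain ⟨a, ha, b, hb, h⟩ := h
  exact ⟨a, ha, b, hb, h.mono hG hD⟩

/-- Some two vertex-disjoint walks of `G` lead from `A` to `B`. -/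
def TwoLinked (G : SimpleGraph V) (A B : Set V) : Prop :=
  ∃ D D' : Set V, Disjoint D D' ∧ LinkedIn G D A B ∧ LinkedIn G D' A B

theorem TwoLinked.mono (hG : G ≤ G') (h : TwoLinked G A B) : TwoLinked G' A B := by
  obtain ⟨D, D', hdisj, h, h'⟩ := h
  exact ⟨D, D', hdisj, h.mono hG subset_rfl, h'.mono hG subset_rfl⟩

theorem TwoLinked.exists_disjoint_pair (h : TwoLinked G A {w, x}) :
    ∃ D D', Disjoint D D' ∧
      (∃ a ∈ A, ReachableIn G D a w ∧ ∀ z ∈ D, z ≠ w → ReachableIn G {w}ᶜ a z) ∧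
      (∃ a ∈ A, ReachableIn G D' a x ∧ ∀ z ∈ D', ReachableIn G {w}ᶜ a z) := by
  obtain ⟨D, D', hdisj, ⟨a, ha, haw⟩, a', ha', hax⟩ : ∃ D D', Disjoint D D' ∧
      (∃ a ∈ A, ReachableIn G D a w) ∧ ∃ a ∈ A, ReachableIn G D' a x := by
    obtain ⟨D, D', hdisj, ⟨a, ha, b, hb, h⟩, a', ha', b', hb', h'⟩ := h
    have hne : b ≠ b' := hdisj.ne_of_mem h.right_mem h'.right_mem
    rcases hb with rfl | rfl <;> rcases hb' with rfl | rfl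
    · exact (hne rfl).elim
    · exact ⟨D, D', hdisj, ⟨a, ha, h⟩, a', ha', h'⟩
    · exact ⟨D', D, hdisj.symm, ⟨a', ha', h'⟩, a, ha, h⟩
    · exact (hne rfl).elim
  obtain ⟨E, hED, hE, hEw⟩ := haw.exists_subset_forall_reachableIn_diff
  obtain ⟨E', hED', hE', hEx⟩ := hax.exists_subset_forall_reachableIn_diff
  have avoid : D' ⊆ {w}ᶜ := fun z hz => (hdisj.ne_of_mem haw.right_mem hz).symm
  refine ⟨E, E', hdisj.mono hED hED',
    ⟨a, ha, hE, fun z hz hzw => (hEw z hz hzw).mono le_rfl fun y hy => hy.2⟩,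
    a', ha', hE', fun z hz => ?_⟩
  obtain rfl | hzx := eq_or_ne z x
  · exact hax.mono le_rfl avoid
  · exact (hEx z hz hzx).mono le_rfl (Set.sdiff_subset.trans avoid)

theorem linkedIn_deleteEdge_pair (hlink : ∀ v, LinkedIn G {v}ᶜ A B)
    (hsep : ¬ LinkedIn (G.deleteEdges {s(x, y)}) {w}ᶜ A B)
    (hy : LinkedIn (G.deleteEdges {s(x, y)}) {w}ᶜ {y} B) (v : V) :
    LinkedIn (G.deleteEdges {s(x, y)}) {v}ᶜ A {w, x} := by
  have avoid : ({v}ᶜ : Set V) \ {w} ⊆ {w}ᶜ := fun z hz => hz.2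
  obtain ⟨a, ha, b, hb, h⟩ := hlink v
  rcases h.deleteEdge x y with h | ⟨h, -⟩ | ⟨h, -⟩
  · rcases h.or_diff_singleton w with h | h
    · exact ⟨a, ha, w, .inl rfl, h⟩
    · exact (hsep ⟨a, ha, b, hb, h.mono le_rfl avoid⟩).elim
  · exact ⟨a, ha, x, .inr rfl, h⟩
  · rcases h.or_diff_singleton w with h | h
    · exact ⟨a, ha, w, .inl rfl, h⟩
    · obtain ⟨_, rfl, b', hb', h'⟩ := hy
      exact (hsep ⟨a, ha, b', hb', (h.mono le_rfl avoid).trans h'⟩).elim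

theorem disjoint_of_not_linkedIn {E E' : Set V} {a b : V} (hsep : ¬ LinkedIn G {w}ᶜ A B)
    (ha : a ∈ A) (hb : b ∈ B) (hE : ∀ z ∈ E, z ≠ w → ReachableIn G {w}ᶜ a z)
    (hE' : ∀ z ∈ E', ReachableIn G {w}ᶜ b z) : Disjoint E E' :=
  Set.disjoint_left.2 fun z hz hz' =>
    hsep ⟨a, ha, b, hb, (hE z hz (hE' z hz').right_mem).trans (hE' z hz').symm⟩

/-- The walks through `w` and through the edge `xy` stay disjoint because `w` separates `A` from
`B` once `xy` is deleted. -/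
theorem twoLinked_of_deleteEdge (hxy : G.Adj x y)
    (hsep : ¬ LinkedIn (G.deleteEdges {s(x, y)}) {w}ᶜ A B)
    (hA : TwoLinked (G.deleteEdges {s(x, y)}) A {w, x})
    (hB : TwoLinked (G.deleteEdges {s(x, y)}) B {w, y}) : TwoLinked G A B := by
  have hle : G.deleteEdges {s(x, y)} ≤ G := deleteEdges_le _
  obtain ⟨D, D', hD, ⟨a, ha, h, hDa⟩, a', ha', h', hDa'⟩ := hA.exists_disjoint_pair
  obtain ⟨E, E', hE, ⟨b, hb, k, hEb⟩, b', hb', k', hEb'⟩ := hB.exists_disjoint_pair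
  refine ⟨D ∪ E, D' ∪ E', Set.disjoint_union_left.2 ⟨Set.disjoint_union_right.2 ⟨hD, ?_⟩,
    Set.disjoint_union_right.2 ⟨?_, hE⟩⟩, ⟨a, ha, b, hb, ?_⟩, a', ha', b', hb', ?_⟩
  · exact disjoint_of_not_linkedIn hsep ha hb' hDa hEb'
  · exact disjoint_of_not_linkedIn (mt LinkedIn.symm hsep) hb ha' hEb hDa'
  · exact (h.mono hle Set.subset_union_left).trans (k.symm.mono hle Set.subset_union_right)
  · exact ((h'.mono hle Set.subset_union_left).trans
      (.of_adj hxy (.inl h'.right_mem) (.inr k'.right_mem))).trans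
      (k'.symm.mono hle Set.subset_union_right)

theorem twoLinked_bot [Nonempty V] (h : ∀ w, LinkedIn (⊥ : SimpleGraph V) {w}ᶜ A B) :
    TwoLinked (⊥ : SimpleGraph V) A B := by
  have hmem : ∀ w, ∃ a ∈ A ∩ B, a ≠ w := by
    intro w
    obtain ⟨a, ha, b, hb, p, hp⟩ := h w
    cases p with
    | nil => exact ⟨a, ⟨ha, hb⟩, hp a (by simp)⟩
    | cons h => exact h.elim
  obtain ⟨a, ha, -⟩ := hmem (Classical.arbitrary V)
  obtain ⟨b, hb, hba⟩ := hmem a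
  exact ⟨{a}, {b}, by simpa using hba.symm, ⟨a, ha.1, a, ha.2, .refl rfl⟩,
    b, hb.1, b, hb.2, .refl rfl⟩

theorem twoLinked_of_forall_linkedIn [Finite V] [Nonempty V]
    (h : ∀ w, LinkedIn G {w}ᶜ A B) : TwoLinked G A B := by
  induction hk : G.edgeSet.ncard using Nat.strong_induction_on generalizing G A B with
  | _ k ih =>
  obtain rfl | hG := eq_or_ne G ⊥
  · exact twoLinked_bot h
  obtain ⟨x, y, hxy⟩ := ne_bot_iff_exists_adj.1 hG
  have hlt : (G.deleteEdges {s(x, y)}).edgeSet.ncard < k := by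
    rw [← hk, edgeSet_deleteEdges]
    exact Set.ncard_sdiff_singleton_lt_of_mem hxy
  by_cases hlink : ∀ w, LinkedIn (G.deleteEdges {s(x, y)}) {w}ᶜ A B
  · exact (ih _ hlt hlink rfl).mono (deleteEdges_le _)
  obtain ⟨w, hsep⟩ := not_forall.1 hlink
  have key : ∀ x y, G.Adj x y → (G.deleteEdges {s(x, y)}).edgeSet.ncard < k →
      ¬ LinkedIn (G.deleteEdges {s(x, y)}) {w}ᶜ A B →
      LinkedIn (G.deleteEdges {s(x, y)}) {w}ᶜ A {x} →
      LinkedIn (G.deleteEdges {s(x, y)}) {w}ᶜ {y} B → TwoLinked G A B := by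
    intro x y hxy hlt hsep hx hy
    refine twoLinked_of_deleteEdge hxy hsep
      (ih _ hlt (linkedIn_deleteEdge_pair h hsep hy) rfl) (ih _ hlt ?_ rfl)
    rw [Sym2.eq_swap] at hx hsep ⊢
    exact linkedIn_deleteEdge_pair (fun v => (h v).symm) (mt LinkedIn.symm hsep) hx.symm
  obtain ⟨a, ha, b, hb, hab⟩ := h w
  rcases hab.deleteEdge x y with hab | ⟨hax, hyb⟩ | ⟨hay, hxb⟩
  · exact (hsep ⟨a, ha, b, hb, hab⟩).elim
  · exact key x y hxy hlt hsep ⟨a, ha, x, rfl, hax⟩ ⟨y, rfl, b, hb, hyb⟩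
  · rw [Sym2.eq_swap] at hlt hsep hay hxb
    exact key y x hxy.symm hlt hsep ⟨a, ha, y, rfl, hay⟩ ⟨x, rfl, b, hb, hxb⟩

end Menger

/-! ### Paths and cycles -/

section Paths

variable {V : Type*} {G : SimpleGraph V} {A B D : Set V} {x y z : V}

theorem isPath_append_of_forall_eq {p : G.Walk x y} {q : G.Walk y z} (hp : p.IsPath)
    (hq : q.IsPath) (h : ∀ v ∈ p.support, v ∈ q.support → v = y) : (p.append q).IsPath := by
  have hyq : y ∉ q.support.tail :=
    (List.nodup_cons.1 (q.cons_tail_support ▸ hq.support_nodup)).1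
  rw [Walk.isPath_def, Walk.support_append, List.nodup_append']
  exact ⟨hp.support_nodup, hq.support_nodup.tail,
    fun v hv hv' => hyq (h v hv (List.mem_of_mem_tail hv') ▸ hv')⟩

theorem isCycle_append_of_forall_eq_or_eq {p : G.Walk x y} {q : G.Walk y x} (hp : p.IsPath)
    (hq : q.IsPath) (h : ∀ v ∈ p.support, v ∈ q.support → v = x ∨ v = y)
    (hn : 3 ≤ p.length + q.length) : (p.append q).IsCycle := by
  have hxp : x ∉ p.support.tail :=
    (List.nodup_cons.1 (p.cons_tail_support ▸ hp.support_nodup)).1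
  have hyq : y ∉ q.support.tail :=
    (List.nodup_cons.1 (q.cons_tail_support ▸ hq.support_nodup)).1
  refine hp.isCycle_append hq (fun v hv hv' => ?_) (by omega)
  rcases h v (List.mem_of_mem_tail hv) (List.mem_of_mem_tail hv') with rfl | rfl
  exacts [hxp hv, hyq hv']

theorem LinkedIn.exists_isPath (h : LinkedIn G D A B) :
    ∃ a ∈ A, ∃ b ∈ B, ∃ p : G.Walk a b, p.IsPath ∧ (∀ v ∈ p.support, v ∈ D) ∧
      (∀ v ∈ p.support, v ∈ A → v = a) ∧ ∀ v ∈ p.support, v ∈ B → v = b := by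
  classical
  have hex : ∃ n, ∃ a ∈ A, ∃ b ∈ B, ∃ p : G.Walk a b, (∀ v ∈ p.support, v ∈ D) ∧
      p.length = n := by
    obtain ⟨a, ha, b, hb, p, hp⟩ := h
    exact ⟨_, a, ha, b, hb, p, hp, rfl⟩
  obtain ⟨a, ha, b, hb, p, hpD, hpn⟩ := Nat.find_spec hex
  have hmin : ∀ a' ∈ A, ∀ b' ∈ B, ∀ q : G.Walk a' b', q.support ⊆ p.support →
      p.length ≤ q.length := fun a' ha' b' hb' q hq =>
    hpn ▸ Nat.find_min' hex ⟨a', ha', b', hb', q, fun v hv => hpD v (hq hv), rfl⟩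
  have hsub : p.bypass.support ⊆ p.support := p.support_bypass_subset_support
  have hlen : p.bypass.length ≤ p.length := p.length_bypass_le_length
  refine ⟨a, ha, b, hb, p.bypass, p.bypass_isPath, fun v hv => hpD v (hsub hv), ?_, ?_⟩
  · intro v hv hvA
    by_contra hva
    exact (hmin v hvA b hb _ fun w hw =>
      hsub (p.bypass.support_dropUntil_subset_support hv hw)).not_gt
      ((p.bypass.length_dropUntil_lt_length hv hva).trans_le hlen)
  · intro v hv hvB
    by_contra hvb
    exact (hmin a ha v hvB _ fun w hw =>
      hsub (p.bypass.support_takeUntil_subset_support hv hw)).not_gt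
      ((p.bypass.length_takeUntil_lt_length hv hvb).trans_le hlen)

theorem exists_first_return [Finite V] {w : G.Walk x y} (hw : w.IsPath) (hxy : x ≠ y)
    {S : Set V} (hy : y ∈ S) :
    ∃ z ∈ S, ∃ (p : G.Walk x z) (q : G.Walk z y), p.IsPath ∧ 0 < p.length ∧ q.IsPath ∧
      p.length + q.length = w.length ∧ ∀ v ∈ p.support, v ∈ S → v = x ∨ v = z := by
  classical
  cases w with
  | nil => exact (hxy rfl).elim
  | @cons _ c _ h w =>
    obtain ⟨hw, hx⟩ := Walk.cons_isPath_iff h w |>.1 hw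
    obtain ⟨z, hzS, hz, hfirst⟩ := w.exists_mem_support_forall_mem_support_imp_eq
      (Set.toFinite S).toFinset ⟨y, by simpa using hy⟩
    simp only [Set.Finite.mem_toFinset] at hzS hfirst
    refine ⟨z, hzS, .cons h (w.takeUntil z hz), w.dropUntil z hz, ?_, by simp,
      hw.dropUntil hz, ?_, ?_⟩
    · exact (hw.takeUntil hz).cons fun hx' => hx (w.support_takeUntil_subset_support hz hx')
    · conv_rhs => rw [← w.take_spec hz]
      rw [Walk.length_cons, Walk.length_cons, Walk.length_append, add_right_comm]
    · intro v hv hvS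
      rw [Walk.support_cons, List.mem_cons] at hv
      exact hv.imp_right (hfirst v hvS)

end Paths

section Cycles

variable {V : Type*} {G : SimpleGraph V} {u z : V} {C : G.Walk u u} {i j N : ℕ}

theorem exists_getVert_eq_of_mem_support (hC : C.IsCycle) (hz : z ∈ C.support) :
    ∃ i < C.length, C.getVert i = z := by
  obtain ⟨i, rfl, hi⟩ := Walk.mem_support_iff_exists_getVert.1 hz
  rcases hi.lt_or_eq with hi | rfl
  · exact ⟨i, hi, rfl⟩
  · exact ⟨0, by have := hC.three_le_length; omega, by simp⟩

theorem eq_of_getVert_eq (hC : C.IsCycle) (hi : i < C.length) (hj : j < C.length)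
    (h : C.getVert i = C.getVert j) : i = j :=
  hC.getVert_injOn' (Nat.le_sub_one_of_lt hi) (Nat.le_sub_one_of_lt hj) h

theorem card_le_ncard_of_getVert_mem [Finite V] (hC : C.IsCycle) {I : Finset ℕ} {S : Set V}
    (hI : ∀ i ∈ I, i < C.length ∧ C.getVert i ∈ S) : I.card ≤ S.ncard := by
  have hinj : Set.InjOn C.getVert I := fun i hi j hj =>
    eq_of_getVert_eq hC (hI i hi).1 (hI j hj).1
  rw [← Set.ncard_coe_finset, ← hinj.ncard_image]
  exact Set.ncard_le_ncard (Set.image_subset_iff.2 fun i hi => (hI i hi).2)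

theorem ncard_support_of_isCycle (hC : C.IsCycle) : {z | z ∈ C.support}.ncard = C.length := by
  have himage : {z | z ∈ C.support} = C.getVert '' (Finset.range C.length) := by
    ext z
    simp only [Finset.coe_range]
    refine ⟨exists_getVert_eq_of_mem_support hC, ?_⟩
    rintro ⟨i, -, rfl⟩
    exact C.getVert_mem_support i
  rw [himage, Set.InjOn.ncard_image, Set.ncard_coe_finset, Finset.card_range]
  intro i hi j hj
  exact eq_of_getVert_eq hC (by simpa using hi) (by simpa using hj)

/-- The distance of the positions `i` and `j` on a cycle of length `L`. -/
def cycDist (L i j : ℕ) : ℕ := min (i.dist j) (L - i.dist j)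

theorem cycDist_self (L i : ℕ) : cycDist L i i = 0 := by
  simp [cycDist]

theorem cycDist_zero_left (L i : ℕ) : cycDist L 0 i = min i (L - i) := by
  simp [cycDist, Nat.dist]

theorem two_mul_cycDist_le (L i j : ℕ) : 2 * cycDist L i j ≤ L := by
  unfold cycDist
  omega

theorem cycDist_triangle {L i j k : ℕ} (hi : i < L) (hj : j < L) (hk : k < L) :
    cycDist L i k ≤ cycDist L i j + cycDist L j k := by
  unfold cycDist Nat.dist
  omega

theorem exists_inner_arc (hC : C.IsCycle) (hij : i < j) (hj : j < C.length) :
    ∃ p : G.Walk (C.getVert i) (C.getVert j), p.IsPath ∧ p.length = j - i ∧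
      p.support ⊆ C.support := by
  have hi : (C.take j).getVert i = C.getVert i := by rw [Walk.take_getVert, min_eq_right hij.le]
  refine ⟨((C.take j).drop i).copy hi rfl, ?_, ?_, ?_⟩
  · rw [Walk.isPath_copy]
    exact (hC.isPath_take hj).drop i
  · rw [Walk.length_copy, Walk.drop_length, Walk.take_length, min_eq_left hj.le]
  · rw [Walk.support_copy]
    exact (((C.take j).isSubwalk_drop i).trans (C.isSubwalk_take j)).support_subset

theorem exists_outer_arc (hC : C.IsCycle) (hij : i < j) (hj : j < C.length) :
    ∃ p : G.Walk (C.getVert i) (C.getVert j), p.IsPath ∧ p.length = C.length - (j - i) ∧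
      p.support ⊆ C.support := by
  refine ⟨((C.drop j).append (C.take i)).reverse, ?_, ?_, ?_⟩
  · rw [Walk.isPath_reverse_iff]
    refine isPath_append_of_forall_eq (hC.isPath_drop (by omega)) (hC.isPath_take (by omega)) ?_
    intro z hz hz'
    obtain ⟨k, rfl, hk⟩ := Walk.mem_support_iff_exists_getVert.1 hz
    obtain ⟨l, hl, hli⟩ := Walk.mem_support_iff_exists_getVert.1 hz'
    rw [Walk.drop_length] at hk
    rw [Walk.take_length] at hli
    rw [Walk.drop_getVert] at hl ⊢
    rw [Walk.take_getVert] at hl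
    obtain hlt | hend := (show j + k ≤ C.length by omega).lt_or_eq
    · have := eq_of_getVert_eq hC (by omega) hlt hl
      omega
    · rw [hend, Walk.getVert_length]
  · rw [Walk.length_reverse, Walk.length_append, Walk.drop_length, Walk.take_length]
    omega
  · rw [Walk.support_reverse]
    intro z hz
    rw [List.mem_reverse, Walk.mem_support_append_iff] at hz
    exact hz.elim (fun h => (C.isSubwalk_drop j).support_subset h)
      (fun h => (C.isSubwalk_take i).support_subset h)

theorem exists_long_arc (hC : C.IsCycle) (hi : i < C.length) (hj : j < C.length) (hij : i ≠ j) :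
    ∃ p : G.Walk (C.getVert i) (C.getVert j), p.IsPath ∧
      p.length = C.length - cycDist C.length i j ∧ p.support ⊆ C.support := by
  wlog hlt : i < j generalizing i j
  · obtain ⟨p, hp, hlen, hsub⟩ := this hj hi hij.symm (by omega)
    refine ⟨p.reverse, hp.reverse, ?_, by simpa using hsub⟩
    rw [Walk.length_reverse, hlen, cycDist, cycDist, Nat.dist_comm]
  have hdist : i.dist j = j - i := Nat.dist_eq_sub_of_le hlt.le
  rcases le_total (j - i) (C.length - (j - i)) with h | h
  · obtain ⟨p, hp, hlen, hsub⟩ := exists_outer_arc hC hlt hj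
    exact ⟨p, hp, by rw [hlen, cycDist, hdist, min_eq_left h], hsub⟩
  · obtain ⟨p, hp, hlen, hsub⟩ := exists_inner_arc hC hlt hj
    exact ⟨p, hp, by rw [hlen, cycDist, hdist, min_eq_right h]; omega, hsub⟩

/-- `C` is a shortest one among the cycles of `G` of length at least `N`. -/
structure IsShortestLongCycle (N : ℕ) (C : G.Walk u u) : Prop where
  isCycle : C.IsCycle
  le_length : N ≤ C.length
  length_le : ∀ {v : V} (D : G.Walk v v), D.IsCycle → N ≤ D.length → C.length ≤ D.length

theorem exists_isShortestLongCycle (h : ∃ (v : V) (D : G.Walk v v), D.IsCycle ∧ N ≤ D.length) :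
    ∃ (u : V) (C : G.Walk u u), IsShortestLongCycle N C := by
  classical
  have hex : ∃ L, ∃ (v : V) (D : G.Walk v v), D.IsCycle ∧ N ≤ D.length ∧ D.length = L := by
    obtain ⟨v, D, hD, hN⟩ := h
    exact ⟨_, v, D, hD, hN, rfl⟩
  obtain ⟨u, C, hC, hN, hL⟩ := Nat.find_spec hex
  exact ⟨u, C, hC, hN, fun D hD hDN => hL ▸ Nat.find_min' hex ⟨_, D, hD, hDN, rfl⟩⟩

namespace IsShortestLongCycle

/-- A chord path shorter than both arcs would close the longer arc to a cycle that is still long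
but shorter than `C`. -/
theorem cycDist_le_length_of_chord (hC : IsShortestLongCycle N C) (hN : 3 ≤ N)
    (hL : 2 * N ≤ C.length + 1) (hi : i < C.length) (hj : j < C.length)
    {d : G.Walk (C.getVert i) (C.getVert j)} (hd : d.IsPath)
    (hdC : ∀ z ∈ d.support, z ∈ C.support → z = C.getVert i ∨ z = C.getVert j) :
    cycDist C.length i j ≤ d.length := by
  obtain rfl | hij := eq_or_ne i j
  · simp [cycDist_self]
  obtain ⟨p, hp, hlen, hpC⟩ := exists_long_arc hC.isCycle hi hj hij
  by_contra! hlt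
  have hhalf := two_mul_cycDist_le C.length i j
  have hcyc : (d.append p.reverse).IsCycle :=
    isCycle_append_of_forall_eq_or_eq hd hp.reverse
      (fun z hz hz' => hdC z hz (hpC (by simpa using hz'))) (by rw [Walk.length_reverse]; omega)
  have hshort := hC.length_le _ hcyc (by rw [Walk.length_append, Walk.length_reverse]; omega)
  rw [Walk.length_append, Walk.length_reverse] at hshort
  omega

theorem cycDist_le_length [Finite V] (hC : IsShortestLongCycle N C) (hN : 3 ≤ N)
    (hL : 2 * N ≤ C.length + 1) (hi : i < C.length) (hj : j < C.length)
    {w : G.Walk (C.getVert i) (C.getVert j)} (hw : w.IsPath) :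
    cycDist C.length i j ≤ w.length := by
  induction hn : w.length using Nat.strong_induction_on generalizing i with
  | _ n ih =>
  obtain rfl | hij := eq_or_ne i j
  · simp [cycDist_self]
  obtain ⟨z, hzC, p, q, hp, hpos, hq, hlen, hpC⟩ :=
    exists_first_return hw (fun h => hij (eq_of_getVert_eq hC.isCycle hi hj h))
      (S := {z | z ∈ C.support}) (C.getVert_mem_support j)
  obtain ⟨k, hk, rfl⟩ := exists_getVert_eq_of_mem_support hC.isCycle hzC
  calc cycDist C.length i j
    _ ≤ cycDist C.length i k + cycDist C.length k j := cycDist_triangle hi hk hj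
    _ ≤ p.length + q.length := add_le_add
      (hC.cycDist_le_length_of_chord hN hL hi hk hp hpC) (ih _ (by omega) hk hq rfl)
    _ = n := hlen.trans hn

theorem dist_getVert [Finite V] (hC : IsShortestLongCycle N C) (hN : 3 ≤ N)
    (hL : 2 * N ≤ C.length + 1) (hi : i < C.length) :
    G.dist u (C.getVert i) = min i (C.length - i) := by
  refine le_antisymm (le_min ?_ ?_) ?_
  · simpa [hi.le] using dist_le (C.take i)
  · simpa [dist_comm] using dist_le (C.drop i)
  · obtain ⟨w, hw, hlen⟩ := (C.take i).reachable.exists_path_of_dist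
    rw [← hlen, ← cycDist_zero_left]
    simpa using hC.cycDist_le_length hN hL (i := 0) (by omega) hi
      (w := w.copy (by simp) rfl) (by simpa using hw)

end IsShortestLongCycle

end Cycles

/-! ### Intersecting families of connected sets -/

section Brambles

variable {V : Type*} {G : SimpleGraph V} {𝓑 : Set (Set V)} {A B Y U : Set V}

/-- A bramble of pairwise intersecting, rather than pairwise touching, connected sets. The
vertex sets of the maximum `M`-subdivisions are the family of interest. -/
structure IsIntersectingBramble (G : SimpleGraph V) (𝓑 : Set (Set V)) : Prop where
  preconnected : ∀ U ∈ 𝓑, (G.induce U).Preconnected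
  intersecting : 𝓑.Intersecting

/-- `S` meets every member of `𝓑`; a transversal of `L(M,G)` is a hitting set for the vertex sets
of its members. -/
def IsHittingSet (𝓑 : Set (Set V)) (S : Set V) : Prop :=
  ∀ U ∈ 𝓑, ¬ Disjoint U S

namespace IsIntersectingBramble

theorem reachableIn (h𝓑 : IsIntersectingBramble G 𝓑) (hU : U ∈ 𝓑) {x y : V} (hx : x ∈ U)
    (hy : y ∈ U) : ReachableIn G U x y :=
  preconnected_induce_iff_reachableIn.1 (h𝓑.preconnected U hU) x hx y hy

theorem forall_disjoint_or_of_separates (h𝓑 : IsIntersectingBramble G 𝓑)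
    (hY : ¬ LinkedIn G Yᶜ A B) :
    (∀ U ∈ 𝓑, Disjoint U Y → Disjoint U A) ∨ ∀ U ∈ 𝓑, Disjoint U Y → Disjoint U B := by
  by_contra! h
  obtain ⟨⟨U, hU, hUY, hUA⟩, U', hU', hUY', hUB⟩ := h
  obtain ⟨a, haU, haA⟩ := Set.not_disjoint_iff.1 hUA
  obtain ⟨b, hbU, hbB⟩ := Set.not_disjoint_iff.1 hUB
  obtain ⟨c, hcU, hcU'⟩ := Set.not_disjoint_iff.1 (h𝓑.intersecting hU hU')
  exact hY ⟨a, haA, b, hbB,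
    ((h𝓑.reachableIn hU haU hcU).mono le_rfl hUY.subset_compl_right).trans
      ((h𝓑.reachableIn hU' hcU' hbU).mono le_rfl hUY'.subset_compl_right)⟩

end IsIntersectingBramble

end Brambles

/-! ### Graphs without long cycles -/

section DepthFirstSearch

variable {V : Type*} {G : SimpleGraph V} {𝓑 : Set (Set V)} {D : Set V} {a f z : V} {N : ℕ}

theorem exists_adj_mem_componentIn (hf : f ∈ D) (ha : a ∉ D)
    (h : ReachableIn G (insert a D) f a) : ∃ x ∈ componentIn G D f, G.Adj a x := by
  obtain ⟨x, y, hxy, -, hx, hyD, hy⟩ :=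
    h.exists_adj_mem_notMem (S := componentIn G D f) (.refl hf) (fun h => ha h.right_mem)
  obtain rfl | hyD := hyD
  · exact ⟨x, hx, hxy.symm⟩
  · exact (hy (hx.trans (.of_adj hxy hx.right_mem hyD))).elim

/-- A state of a depth-first search in `G`: the search path `p`, listed from its tip `a` to its root
`z`, and a vertex `f` whose component in `G - p` is attached to `a` and contains a member
of `𝓑`. -/
structure SearchState (G : SimpleGraph V) (𝓑 : Set (Set V)) (p : G.Walk a z) (f : V) : Prop where
  isPath : p.IsPath
  exists_adj : ∃ x ∈ componentIn G {v | v ∉ p.support} f, G.Adj a x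
  exists_mem : ∃ U ∈ 𝓑, f ∈ U ∧ ∀ v ∈ U, v ∉ p.support

/-- The part of the search path `p` that is attached to the component of `f` in `G - p`. -/
def attachments {G : SimpleGraph V} (p : G.Walk a z) (f : V) : Set V :=
  {v | v ∈ p.support ∧ ∃ x ∈ componentIn G {v | v ∉ p.support} f, G.Adj v x}

theorem add_two_le_of_getVert_mem_attachments (hN : 2 ≤ N)
    (hcyc : ∀ (v : V) (C : G.Walk v v), C.IsCycle → C.length < N) {p : G.Walk a z} (hp : p.IsPath)
    {x : V} (hx : x ∈ componentIn G {v | v ∉ p.support} f) (hax : G.Adj a x) {i : ℕ}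
    (hi : i ≤ p.length) (hatt : p.getVert i ∈ attachments p f) : i + 2 ≤ N := by
  classical
  obtain rfl | hi0 := Nat.eq_zero_or_pos i
  · simpa using hN
  obtain ⟨hv, y, hy, hvy⟩ := hatt
  obtain ⟨q, hq⟩ := hy.symm.trans hx
  have hqp : ∀ v ∈ q.bypass.support, v ∉ p.support :=
    fun v hv => hq v (q.support_bypass_subset_support hv)
  have hva : p.getVert i ≠ a := fun h =>
    hi0.ne' (hp.getVert_injOn (by simpa using hi) (by simp) (by simpa using h))
  have hr : (Walk.cons hvy (q.bypass.concat hax.symm)).IsPath := by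
    refine (q.bypass_isPath.concat (fun h => hqp _ h p.start_mem_support) _).cons ?_
    rw [Walk.support_concat, List.mem_append, List.mem_singleton]
    exact not_or.2 ⟨fun h => hqp _ h hv, hva⟩
  have hC : ((p.take i).append (Walk.cons hvy (q.bypass.concat hax.symm))).IsCycle := by
    refine isCycle_append_of_forall_eq_or_eq (hp.take i) hr (fun w hw hw' => ?_) ?_
    · rw [Walk.support_cons, Walk.support_concat, List.mem_cons, List.mem_append,
        List.mem_singleton] at hw'
      rcases hw' with hw' | hw' | hw'
      · exact .inr hw'
      · exact (hqp w hw' ((p.isSubwalk_take i).support_subset hw)).elim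
      · exact .inl hw'
    · rw [Walk.take_length, Walk.length_cons, Walk.length_concat]
      omega
  have hlen := hcyc _ _ hC
  rw [Walk.length_append, Walk.take_length, Walk.length_cons, Walk.length_concat] at hlen
  omega

namespace SearchState

variable {p : G.Walk a z}

theorem ncard_attachments_lt (h : SearchState G 𝓑 p f) (hN : 2 ≤ N)
    (hcyc : ∀ (v : V) (C : G.Walk v v), C.IsCycle → C.length < N) :
    (attachments p f).ncard < N := by
  obtain ⟨x, hx, hax⟩ := h.exists_adj
  have hsub : attachments p f ⊆ p.getVert '' (Finset.range (N - 1)) := by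
    intro v hv
    obtain ⟨i, rfl, hi⟩ := Walk.mem_support_iff_exists_getVert.1 hv.1
    have := add_two_le_of_getVert_mem_attachments hN hcyc h.isPath hx hax hi hv
    exact ⟨i, by simp only [Finset.coe_range, Set.mem_Iio]; omega, rfl⟩
  calc (attachments p f).ncard
    _ ≤ (p.getVert '' (Finset.range (N - 1))).ncard :=
      Set.ncard_le_ncard hsub ((Finset.finite_toSet _).image _)
    _ ≤ (Finset.range (N - 1) : Set ℕ).ncard := Set.ncard_image_le (Finset.finite_toSet _)
    _ < N := by rw [Set.ncard_coe_finset, Finset.card_range]; omega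

theorem subset_componentIn (h : SearchState G 𝓑 p f) (h𝓑 : IsIntersectingBramble G 𝓑) {U : Set V}
    (hU : U ∈ 𝓑) (hatt : Disjoint U (attachments p f)) :
    U ⊆ componentIn G {v | v ∉ p.support} f := by
  obtain ⟨U₀, hU₀, hf, hU₀p⟩ := h.exists_mem
  obtain ⟨g, hgU, hgU₀⟩ := Set.not_disjoint_iff.1 (h𝓑.intersecting hU hU₀)
  have hg : g ∈ componentIn G {v | v ∉ p.support} f :=
    (h𝓑.reachableIn hU₀ hf hgU₀).mono le_rfl hU₀p
  by_contra hsub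
  obtain ⟨y, hyU, hy⟩ := Set.not_subset.1 hsub
  obtain ⟨v, w, hvw, -, hv, hwU, hw⟩ := (h𝓑.reachableIn hU hgU hyU).exists_adj_mem_notMem hg hy
  refine Set.disjoint_left.1 hatt hwU ⟨?_, v, hv, hvw.symm⟩
  by_contra hwp
  exact hw (hv.trans (.of_adj hvw hv.right_mem hwp))

theorem exists_smaller [Finite V] (h : SearchState G 𝓑 p f) (h𝓑 : IsIntersectingBramble G 𝓑)
    {b : V} (hb : b ∈ componentIn G {v | v ∉ p.support} f) (hab : G.Adj a b)
    (hhit : ¬ IsHittingSet 𝓑 (insert b (attachments p f))) :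
    ∃ (g : V) (q : G.Walk b z), SearchState G 𝓑 q g ∧
      (componentIn G {v | v ∉ q.support} g).ncard <
        (componentIn G {v | v ∉ p.support} f).ncard := by
  simp only [IsHittingSet, not_forall, not_not] at hhit
  obtain ⟨U, hU, hdisj⟩ := hhit
  obtain ⟨hbU, hatt⟩ := Set.disjoint_insert_right.1 hdisj
  have hUK := h.subset_componentIn h𝓑 hU hatt
  obtain ⟨g, hgU⟩ : U.Nonempty := Set.nonempty_iff_ne_empty.2 fun hne =>
    h𝓑.intersecting hU hU (by simp [hne])
  have hq : ∀ v, v ∉ (Walk.cons hab.symm p).support ↔ v ≠ b ∧ v ∉ p.support := by simp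
  have hUq : ∀ v ∈ U, v ∉ (Walk.cons hab.symm p).support := fun v hv =>
    (hq v).2 ⟨fun hvb => hbU (hvb ▸ hv), (hUK hv).right_mem⟩
  have hsub : {v | v ∉ (Walk.cons hab.symm p).support} ⊆ {v | v ∉ p.support} :=
    fun v hv => ((hq v).1 hv).2
  refine ⟨g, .cons hab.symm p, ⟨h.isPath.cons hb.right_mem,
    exists_adj_mem_componentIn (hUq g hgU) (by simp) ?_, U, hU, hgU, hUq⟩,
    Set.ncard_lt_ncard ⟨fun y hy => (hUK hgU).trans (hy.mono le_rfl hsub), fun hle => ?_⟩⟩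
  · refine ((hUK hgU).symm.trans hb).mono le_rfl fun v hv => ?_
    exact (eq_or_ne v b).imp_right fun hvb => (hq v).2 ⟨hvb, hv⟩
  · exact ((hq b).1 (hle hb).right_mem).1 rfl

theorem exists_isHittingSet [Finite V] (h : SearchState G 𝓑 p f) (h𝓑 : IsIntersectingBramble G 𝓑)
    (hN : 2 ≤ N) (hcyc : ∀ (v : V) (C : G.Walk v v), C.IsCycle → C.length < N) :
    ∃ S, IsHittingSet 𝓑 S ∧ S.ncard ≤ N := by
  induction hk : (componentIn G {v | v ∉ p.support} f).ncard using Nat.strong_induction_on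
    generalizing a f with
  | _ k ih =>
  obtain ⟨b, hb, hab⟩ := h.exists_adj
  by_cases hhit : IsHittingSet 𝓑 (insert b (attachments p f))
  · exact ⟨_, hhit, (Set.ncard_insert_le _ _).trans (h.ncard_attachments_lt hN hcyc)⟩
  · obtain ⟨g, q, hq, hlt⟩ := h.exists_smaller h𝓑 hb hab hhit
    exact ih _ (hk ▸ hlt) hq rfl

end SearchState

theorem IsIntersectingBramble.exists_isHittingSet_of_no_long_cycle [Finite V]
    (h𝓑 : IsIntersectingBramble G 𝓑) (hN : 2 ≤ N)
    (hcyc : ∀ (v : V) (C : G.Walk v v), C.IsCycle → C.length < N) :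
    ∃ S, IsHittingSet 𝓑 S ∧ S.ncard ≤ N := by
  obtain rfl | ⟨U₀, hU₀⟩ := 𝓑.eq_empty_or_nonempty
  · exact ⟨∅, by simp [IsHittingSet], by simp⟩
  obtain ⟨r, hr, -⟩ := Set.not_disjoint_iff.1 (h𝓑.intersecting hU₀ hU₀)
  by_cases hhit : IsHittingSet 𝓑 {r}
  · exact ⟨{r}, hhit, by rw [Set.ncard_singleton]; omega⟩
  simp only [IsHittingSet, not_forall, not_not, Set.disjoint_singleton_right] at hhit
  obtain ⟨U, hU, hrU⟩ := hhit
  obtain ⟨f, hfU, hfU₀⟩ := Set.not_disjoint_iff.1 (h𝓑.intersecting hU hU₀)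
  have hUr : ∀ v ∈ U, v ∉ (Walk.nil : G.Walk r r).support := by
    rintro v hv hvr
    exact hrU (List.mem_singleton.1 hvr ▸ hv)
  have hstart : SearchState G 𝓑 (Walk.nil : G.Walk r r) f :=
    ⟨.nil, exists_adj_mem_componentIn (hUr f hfU) (by simp)
      ((h𝓑.reachableIn hU₀ hfU₀ hr).mono le_rfl fun v _ => by simpa using eq_or_ne v r),
      U, hU, hfU, hUr⟩
  exact hstart.exists_isHittingSet h𝓑 hN hcyc

end DepthFirstSearch

/-! ### Graphs whose shortest long cycle is very long -/

section Pretransversals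

variable {V : Type*} {G : SimpleGraph V} {𝓑 : Set (Set V)} {t : ℝ} {u : V}

/-- The paper's pretransversal `(A ∪ Y, Y)`, with `n ^ (1 / 3)` replaced by `t`: a set `Y` that is
smaller than `A` by a factor of `t` and meets every member of `𝓑` meeting `A`. The vertices of `A`
are not isolated, so that isolating them makes progress. -/
structure IsSetPretransversal (G : SimpleGraph V) (𝓑 : Set (Set V)) (t : ℝ) (A Y : Set V) :
    Prop where
  nonempty : A.Nonempty
  subset_support : A ⊆ G.support
  mul_ncard_le : t * Y.ncard ≤ A.ncard
  disjoint : ∀ U ∈ 𝓑, Disjoint U Y → Disjoint U A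

theorem not_linkedIn_compl_sphere (G : SimpleGraph V) (u : V) (i : ℕ) :
    ¬ LinkedIn G {z | G.dist u z = i}ᶜ {z | G.dist u z ≤ i} {z | i ≤ G.dist u z} := by
  rintro ⟨a, ha, b, hb, h⟩
  have hbi : G.dist u b ≠ i := h.right_mem
  obtain ⟨x, y, hxy, hax, hx, -, hy⟩ := h.exists_adj_mem_notMem (S := {z | G.dist u z ≤ i}) ha
    fun hb' => hbi (le_antisymm hb' hb)
  have hxi : G.dist u x ≠ i := hax.right_mem
  simp only [Set.mem_ofPred_eq] at hx hy
  have := hxy.diff_dist_adj (u := u)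
  omega

theorem exists_ncard_fiber_le [Finite V] (f : V → ℕ) (r : ℕ) {k : ℕ} (hk : 0 < k)
    (hV : (Nat.card V : ℝ) ≤ k * t) :
    ∃ i, r ≤ i ∧ i < r + k ∧ ({z | f z = i}.ncard : ℝ) ≤ t := by
  classical
  have := Fintype.ofFinite V
  obtain ⟨i, hi, hit⟩ := Finset.exists_card_fiber_le_of_card_le_nsmul
    (s := Finset.univ) (t := Finset.Ico r (r + k)) (f := f) (b := t)
    (Finset.nonempty_Ico.2 (by omega)) (by simpa using hV)
  rw [Finset.mem_Ico] at hi
  exact ⟨i, hi.1, hi.2, by rwa [← Finset.coe_filter_univ, Set.ncard_coe_finset]⟩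

theorem exists_ncard_level_le [Finite V] (f : V → ℕ) (ht : 1 < t) (hV : Nat.card V ≤ t ^ 3) :
    ∃ i : ℕ, t ^ 2 - 1 ≤ 2 * i ∧ 2 * i < 3 * t ^ 2 + 1 ∧ {z | f z = i}.ncard ≤ t := by
  have ht2 : 1 < t ^ 2 := one_lt_pow₀ ht two_ne_zero
  have hk : t ^ 2 ≤ ⌈t ^ 2⌉₊ := Nat.le_ceil _
  obtain ⟨i, hri, hik, hit⟩ := exists_ncard_fiber_le f ⌈(t ^ 2 - 1) / 2⌉₊
    (k := ⌈t ^ 2⌉₊) (t := t) (Nat.ceil_pos.2 (by linarith)) (by nlinarith)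
  have hi : (t ^ 2 - 1) / 2 ≤ i := Nat.ceil_le.1 hri
  have hr := Nat.ceil_lt_add_one (show 0 ≤ (t ^ 2 - 1) / 2 by linarith)
  have hk' := Nat.ceil_lt_add_one (show 0 ≤ t ^ 2 by linarith)
  have hik' : (i : ℝ) + 1 ≤ ⌈(t ^ 2 - 1) / 2⌉₊ + ⌈t ^ 2⌉₊ := by exact_mod_cast hik
  exact ⟨i, by linarith, by linarith, hit⟩

namespace IsShortestLongCycle

variable [Finite V] {C : G.Walk u u} {N i : ℕ}

theorem le_ncard_dist_le (hC : IsShortestLongCycle N C) (hN : 3 ≤ N)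
    (hL : 2 * N ≤ C.length + 1) (hi : 2 * i < C.length) :
    2 * i + 1 ≤ {z ∈ {z | z ∈ C.support} | G.dist u z ≤ i}.ncard := by
  calc 2 * i + 1
    _ = (Finset.range (i + 1) ∪ Finset.Ico (C.length - i) C.length).card := by
      rw [Finset.card_union_of_disjoint, Finset.card_range, Nat.card_Ico]
      · omega
      · rw [Finset.disjoint_left]
        simp only [Finset.mem_range, Finset.mem_Ico]
        omega
    _ ≤ _ := card_le_ncard_of_getVert_mem hC.isCycle fun j hj => by
      simp only [Finset.mem_union, Finset.mem_range, Finset.mem_Ico] at hj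
      have hjL : j < C.length := by omega
      refine ⟨hjL, C.getVert_mem_support j, ?_⟩
      rw [hC.dist_getVert hN hL hjL]
      omega

theorem le_ncard_le_dist (hC : IsShortestLongCycle N C) (hN : 3 ≤ N)
    (hL : 2 * N ≤ C.length + 1) (hi : 1 ≤ i) :
    C.length + 1 ≤ {z ∈ {z | z ∈ C.support} | i ≤ G.dist u z}.ncard + 2 * i := by
  have hcard : (Finset.Icc i (C.length - i)).card ≤ _ :=
    card_le_ncard_of_getVert_mem (S := {z ∈ {z | z ∈ C.support} | i ≤ G.dist u z}) hC.isCycle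
      fun j hj => by
        rw [Finset.mem_Icc] at hj
        have hjL : j < C.length := by omega
        refine ⟨hjL, C.getVert_mem_support j, ?_⟩
        rw [hC.dist_getVert hN hL hjL]
        omega
  rw [Nat.card_Icc] at hcard
  omega

end IsShortestLongCycle

theorem mem_support_of_mem_cycle {C : G.Walk u u} (hC : C.IsCycle) {z : V} (hz : z ∈ C.support) :
    z ∈ G.support := by
  obtain ⟨i, hi, rfl⟩ := exists_getVert_eq_of_mem_support hC hz
  exact ⟨_, C.adj_getVert_succ hi⟩

/-- Distances from `u` along `C` are distances in `G`, so every sphere around `u` of suitable radius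
cuts `C` into two large parts, and some such sphere is small. -/
theorem exists_isSetPretransversal_of_long_cycle [Finite V] (h𝓑 : IsIntersectingBramble G 𝓑)
    (ht : 1 < t) (hV : Nat.card V ≤ t ^ 3) {C : G.Walk u u}
    (hC : IsShortestLongCycle ⌈2 * t ^ 2⌉₊ C) (hL : 4 * t ^ 2 < C.length) :
    ∃ A Y, IsSetPretransversal G 𝓑 t A Y := by
  have ht2 : 1 < t ^ 2 := one_lt_pow₀ ht two_ne_zero
  have hN : 3 ≤ ⌈2 * t ^ 2⌉₊ := Nat.lt_ceil.2 (by push_cast; linarith)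
  have hNL : 2 * ⌈2 * t ^ 2⌉₊ ≤ C.length + 1 := by
    have := Nat.ceil_lt_add_one (show 0 ≤ 2 * t ^ 2 by positivity)
    rw [← Nat.lt_succ_iff, ← @Nat.cast_lt ℝ]
    push_cast
    linarith
  obtain ⟨i, hi, hi_lt, hit⟩ := exists_ncard_level_le (G.dist u) ht hV
  have hi_pos : 1 ≤ i := Nat.cast_pos.1 (show (0 : ℝ) < i by linarith)
  have pretransversal : ∀ A ⊆ {z | z ∈ C.support}, t ^ 2 ≤ A.ncard →
      (∀ U ∈ 𝓑, Disjoint U {z | G.dist u z = i} → Disjoint U A) →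
      IsSetPretransversal G 𝓑 t A {z | G.dist u z = i} := fun A hAC hA hUA =>
    ⟨Set.nonempty_of_ncard_ne_zero (Nat.cast_ne_zero.1 (by linarith : (A.ncard : ℝ) ≠ 0)),
      fun z hz => mem_support_of_mem_cycle hC.isCycle (hAC hz), by nlinarith, hUA⟩
  rcases h𝓑.forall_disjoint_or_of_separates (not_linkedIn_compl_sphere G u i) with h | h
  · refine ⟨_, _, pretransversal {z ∈ {z | z ∈ C.support} | G.dist u z ≤ i} (Set.sep_subset _ _)
      ?_ fun U hU hUY => (h U hU hUY).mono_right fun z hz => hz.2⟩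
    have hiL : 2 * i < C.length := Nat.cast_lt (α := ℝ).1 (by push_cast; linarith)
    have : ((2 * i + 1 : ℕ) : ℝ) ≤ _ := Nat.cast_le.2 (hC.le_ncard_dist_le hN hNL hiL)
    push_cast at this
    linarith
  · refine ⟨_, _, pretransversal {z ∈ {z | z ∈ C.support} | i ≤ G.dist u z} (Set.sep_subset _ _)
      ?_ fun U hU hUY => (h U hU hUY).mono_right fun z hz => hz.2⟩
    have : ((C.length + 1 : ℕ) : ℝ) ≤ _ := Nat.cast_le.2 (hC.le_ncard_le_dist hN hNL hi_pos)
    push_cast at this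
    linarith

end Pretransversals

/-! ### Sets with short detours -/

section Isolate

variable {V : Type*} {G : SimpleGraph V} {A B D E : Set V} {a b x y : V}

/-- The graph `G` with all vertices of `D` made isolated; unlike `G - D` it keeps the vertex
type. -/
def isolate (G : SimpleGraph V) (D : Set V) : SimpleGraph V :=
  (G.induce Dᶜ).spanningCoe

theorem isolate_le (G : SimpleGraph V) (D : Set V) : isolate G D ≤ G :=
  G.spanningCoe_induce_le _

theorem isolate_adj : (isolate G D).Adj x y ↔ G.Adj x y ∧ x ∉ D ∧ y ∉ D := by
  simp [isolate]

theorem support_isolate_subset : (isolate G D).support ⊆ Dᶜ :=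
  fun _ ⟨_, h⟩ => (isolate_adj.1 h).2.1

theorem forall_mem_support_notMem (p : (isolate G D).Walk a b) (ha : a ∉ D) :
    ∀ z ∈ p.support, z ∉ D := by
  induction p with
  | nil => simpa using ha
  | cons h p ih => simpa [ha] using ih (isolate_adj.1 h).2.2

theorem reachableIn_isolate_iff (ha : a ∉ D) :
    ReachableIn (isolate G D) E a b ↔ ReachableIn G (E \ D) a b := by
  constructor
  · rintro ⟨p, hp⟩
    refine ⟨p.mapLe (isolate_le G D), fun z hz => ?_⟩
    rw [Walk.support_mapLe_eq_support] at hz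
    exact ⟨hp z hz, forall_mem_support_notMem p ha z hz⟩
  · rintro ⟨p, hp⟩
    have hadj : ∀ e ∈ p.edges, e ∈ (isolate G D).edgeSet := by
      intro e he
      induction e with
      | _ x y =>
      exact isolate_adj.2 ⟨p.adj_of_mem_edges he, (hp x (p.fst_mem_support_of_mem_edges he)).2,
        (hp y (p.snd_mem_support_of_mem_edges he)).2⟩
    exact ⟨p.transfer _ hadj, fun z hz => (hp z (p.support_transfer hadj ▸ hz)).1⟩

theorem linkedIn_isolate_iff (hA : Disjoint A D) :
    LinkedIn (isolate G D) E A B ↔ LinkedIn G (E \ D) A B := by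
  simp only [LinkedIn]
  refine exists_congr fun a => and_congr_right fun ha => exists_congr fun b =>
    and_congr_right fun _ => reachableIn_isolate_iff (Set.disjoint_left.1 hA ha)

theorem IsIntersectingBramble.isolate {𝓑 : Set (Set V)} (h𝓑 : IsIntersectingBramble G 𝓑)
    (Z : Set V) :
    IsIntersectingBramble (_root_.isolate G Z) {U ∈ 𝓑 | Disjoint U Z} where
  preconnected U hU := preconnected_induce_iff_reachableIn.2 fun x hx y hy => by
    rw [reachableIn_isolate_iff (Set.disjoint_left.1 hU.2 hx), hU.2.sdiff_eq_left]
    exact h𝓑.reachableIn hU.1 hx hy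
  intersecting := h𝓑.intersecting.mono (Set.sep_subset _ _)

end Isolate

section Detours

variable {V : Type*} {G G' : SimpleGraph V} {R T : Set V} {u x y : V} {ℓ : ℕ}

/-- A path that leaves the set `R` between its two ends. -/
structure IsDetour (R : Set V) (d : G.Walk x y) : Prop where
  isPath : d.IsPath
  eq_or_eq : ∀ z ∈ d.support, z ∈ R → z = x ∨ z = y

theorem IsDetour.reverse {d : G.Walk x y} (hd : IsDetour R d) : IsDetour R d.reverse where
  isPath := hd.isPath.reverse
  eq_or_eq z hz hzR := (hd.eq_or_eq z (by simpa using hz) hzR).symm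

/-- Any detour of `R` between distinct vertices of `T` is shorter than `ℓ`. -/
def HasShortDetours (G : SimpleGraph V) (R T : Set V) (ℓ : ℕ) : Prop :=
  ∀ ⦃x y : V⦄, x ∈ T → y ∈ T → x ≠ y → ∀ d : G.Walk x y, IsDetour R d → d.length < ℓ

theorem HasShortDetours.anti (hG : G ≤ G') (h : HasShortDetours G' R T ℓ) :
    HasShortDetours G R T ℓ := fun x y hx hy hxy d hd => by
  simpa using h hx hy hxy (d.mapLe hG)
    ⟨by simpa [Walk.isPath_mapLe] using hd.isPath, by simpa using hd.eq_or_eq⟩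

theorem exists_long_detour_through_cycle {C : G.Walk u u} (hC : C.IsCycle)
    (hCR : Disjoint {z | z ∈ C.support} R) {a a' : V} (ha : a ∈ C.support) (ha' : a' ∈ C.support)
    {q : G.Walk a x} {q' : G.Walk a' y} (hq : q.IsPath) (hq' : q'.IsPath)
    (hqq' : ∀ z ∈ q.support, z ∉ q'.support)
    (hqC : ∀ z ∈ q.support, z ∈ C.support → z = a)
    (hqC' : ∀ z ∈ q'.support, z ∈ C.support → z = a')
    (hqR : ∀ z ∈ q.support, z ∈ R → z = x) (hqR' : ∀ z ∈ q'.support, z ∈ R → z = y) :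
    ∃ d : G.Walk x y, IsDetour R d ∧ C.length + 2 * (q.length + q'.length) ≤ 2 * d.length := by
  obtain ⟨i, hi, rfl⟩ := exists_getVert_eq_of_mem_support hC ha
  obtain ⟨j, hj, rfl⟩ := exists_getVert_eq_of_mem_support hC ha'
  have hij : i ≠ j := by
    rintro rfl
    exact hqq' _ q.start_mem_support q'.start_mem_support
  obtain ⟨c, hc, hclen, hcC⟩ := exists_long_arc hC hi hj hij
  have hcq' : (c.append q').IsPath :=
    isPath_append_of_forall_eq hc hq' fun z hz hz' => hqC' z hz' (hcC hz)
  refine ⟨q.reverse.append (c.append q'), ⟨?_, ?_⟩, ?_⟩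
  · refine isPath_append_of_forall_eq hq.reverse hcq' fun z hz hz' => ?_
    rw [Walk.support_reverse, List.mem_reverse] at hz
    rcases Walk.mem_support_append_iff _ _ |>.1 hz' with hz' | hz'
    · exact hqC z hz (hcC hz')
    · exact (hqq' z hz hz').elim
  · intro z hz hzR
    rw [Walk.mem_support_append_iff, Walk.mem_support_append_iff, Walk.support_reverse,
      List.mem_reverse] at hz
    rcases hz with hz | hz | hz
    · exact Or.inl (hqR z hz hzR)
    · exact (Set.disjoint_left.1 hCR (hcC hz) hzR).elim
    · exact Or.inr (hqR' z hz hzR)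
  · have := two_mul_cycDist_le C.length i j
    rw [Walk.length_append, Walk.length_append, Walk.length_reverse, hclen]
    omega

theorem HasShortDetours.exists_not_linkedIn_cycle [Finite V] (hT : HasShortDetours G R T ℓ)
    (hTR : T ⊆ R) {C : G.Walk u u} (hC : C.IsCycle) (hCR : Disjoint {z | z ∈ C.support} R)
    (hℓ : 2 * ℓ ≤ C.length + 4) :
    ∃ v, ¬ LinkedIn G ({v}ᶜ \ (R \ T)) {z | z ∈ C.support} T := by
  by_contra! hlink
  have : Nonempty V := ⟨u⟩
  have hCD : Disjoint {z | z ∈ C.support} (R \ T) := hCR.mono_right Set.sdiff_subset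
  obtain ⟨E, E', hEE', hE, hE'⟩ := twoLinked_of_forall_linkedIn (G := isolate G (R \ T))
    fun v => (linkedIn_isolate_iff hCD).2 (hlink v)
  obtain ⟨a, ha, x, hx, q, hq, hqE, hqC, hqT⟩ := ((linkedIn_isolate_iff hCD).1 hE).exists_isPath
  obtain ⟨a', ha', y, hy, q', hq', hqE', hqC', hqT'⟩ :=
    ((linkedIn_isolate_iff hCD).1 hE').exists_isPath
  have hqq' : ∀ z ∈ q.support, z ∉ q'.support := fun z hz hz' =>
    Set.disjoint_left.1 hEE' (hqE z hz).1 (hqE' z hz').1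
  have hxy : x ≠ y := by
    rintro rfl
    exact hqq' _ q.end_mem_support q'.end_mem_support
  have length_pos : ∀ {a x : V} (q : G.Walk a x), a ∈ C.support → x ∈ T → 0 < q.length := by
    intro a x q ha hx
    refine Nat.pos_of_ne_zero fun h => Set.disjoint_left.1 hCR ha (hTR ?_)
    rwa [Walk.eq_of_length_eq_zero h]
  have hpos := length_pos q ha hx
  have hpos' := length_pos q' ha' hy
  obtain ⟨d, hd, hlen⟩ := exists_long_detour_through_cycle hC hCR ha ha' hq hq' hqq' hqC hqC'
    (fun z hz hzR => hqT z hz (by_contra fun h => (hqE z hz).2 ⟨hzR, h⟩))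
    (fun z hz hzR => hqT' z hz (by_contra fun h => (hqE' z hz).2 ⟨hzR, h⟩))
  have := hT hx hy hxy d hd
  omega

/-- For every `ℓ`, the set `R` is the union of few pieces having only detours shorter than `ℓ`. If
`R` is the vertex set of a maximum subdivision of a multigraph with `m` edges, such pieces are found
by cutting its paths into segments of length less than `ℓ`. -/
def HasDetourCover (G : SimpleGraph V) (m : ℕ) (R : Set V) : Prop :=
  ∀ ℓ, 0 < ℓ → ∃ 𝓟 : Finset (Set V), 𝓟.card * ℓ ≤ Nat.card V + m + m * ℓ ∧
    ⋃₀ (𝓟 : Set (Set V)) = R ∧ ∀ T ∈ 𝓟, HasShortDetours G R T ℓ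

namespace HasDetourCover

variable {m : ℕ}

theorem anti (hG : G ≤ G') (h : HasDetourCover G' m R) : HasDetourCover G m R := by
  intro ℓ hℓ
  obtain ⟨𝓟, hcard, hcover, h𝓟⟩ := h ℓ hℓ
  exact ⟨𝓟, hcard, hcover, fun T hT => (h𝓟 T hT).anti hG⟩

theorem exists_not_linkedIn_cycle [Finite V] (hR : HasDetourCover G m R) {C : G.Walk u u}
    (hC : C.IsCycle) (hCR : Disjoint {z | z ∈ C.support} R) (hℓ : 0 < ℓ)
    (hℓC : 2 * ℓ ≤ C.length + 4) :
    ∃ Y : Set V, Y.ncard * ℓ ≤ Nat.card V + m + m * ℓ ∧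
      ¬ LinkedIn G Yᶜ {z | z ∈ C.support} R := by
  classical
  obtain ⟨𝓟, hcard, hcover, h𝓟⟩ := hR ℓ hℓ
  have hsep : ∀ T : 𝓟, ∃ v, ¬ LinkedIn G ({v}ᶜ \ (R \ T)) {z | z ∈ C.support} T := fun T =>
    (h𝓟 T T.2).exists_not_linkedIn_cycle (hcover ▸ Set.subset_sUnion_of_mem T.2) hC hCR hℓC
  choose v hv using hsep
  refine ⟨Set.range v, le_trans (Nat.mul_le_mul_right _ ?_) hcard, fun hlink => ?_⟩
  · rw [← Set.image_univ]
    exact (Set.ncard_image_le (Set.toFinite _)).trans (by simp [Set.ncard_univ])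
  · obtain ⟨a, ha, b, hb, p, -, hpY, -, hpR⟩ := hlink.exists_isPath
    obtain ⟨T, hT, hbT⟩ := Set.mem_sUnion.1 (hcover.symm ▸ hb)
    refine hv ⟨T, hT⟩ ⟨a, ha, b, hbT, p, fun z hz => ⟨?_, ?_⟩⟩
    · rintro rfl
      exact hpY _ hz (Set.mem_range_self _)
    · rintro ⟨hzR, hzT⟩
      exact hzT (hpR z hz hzR ▸ hbT)

end HasDetourCover

end Detours

/-! ### Small hitting sets -/

section HittingSets

variable {V : Type*} [Finite V] {G : SimpleGraph V} {𝓑 : Set (Set V)} {t : ℝ} {m : ℕ} {u : V}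

theorem HasDetourCover.exists_not_linkedIn_cycle_of_le {R : Set V} (hR : HasDetourCover G m R)
    (ht : 1 < t) (hV : Nat.card V ≤ t ^ 3) (hm : m ≤ t) {C : G.Walk u u} (hC : C.IsCycle)
    (hCR : Disjoint {z | z ∈ C.support} R) (hL : 2 * t ^ 2 ≤ C.length) :
    ∃ Y : Set V, Y.ncard ≤ 2 * t ∧ ¬ LinkedIn G Yᶜ {z | z ∈ C.support} R := by
  obtain ⟨ℓ, hℓ⟩ : ∃ ℓ, ℓ = (C.length + 4) / 2 := ⟨_, rfl⟩
  obtain ⟨Y, hY, hsep⟩ := hR.exists_not_linkedIn_cycle hC hCR (ℓ := ℓ) (by omega) (by omega)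
  refine ⟨Y, ?_, hsep⟩
  have hℓ_ge : t ^ 2 + 1 ≤ ℓ := by
    have : (C.length : ℝ) + 2 ≤ 2 * ℓ := by exact_mod_cast (by omega : C.length + 2 ≤ 2 * ℓ)
    linarith
  have hℓ_pos : (0 : ℝ) < ℓ := by nlinarith
  refine le_of_mul_le_mul_right ?_ hℓ_pos
  calc (Y.ncard : ℝ) * ℓ
    _ ≤ Nat.card V + m + m * ℓ := by exact_mod_cast hY
    _ ≤ t ^ 3 + t + t * ℓ := by gcongr
    _ = t * (t ^ 2 + 1) + t * ℓ := by ring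
    _ ≤ t * ℓ + t * ℓ := by gcongr
    _ = 2 * t * ℓ := by ring

namespace IsIntersectingBramble

theorem exists_isHittingSet_or_isSetPretransversal_of_cycle (h𝓑 : IsIntersectingBramble G 𝓑)
    (hcover : ∀ R ∈ 𝓑, HasDetourCover G m R) (ht : 1 < t) (hV : Nat.card V ≤ t ^ 3) (hm : m ≤ t)
    {C : G.Walk u u} (hC : C.IsCycle) (hL : 2 * t ^ 2 ≤ C.length) (hL' : C.length ≤ 4 * t ^ 2) :
    (∃ S, IsHittingSet 𝓑 S ∧ S.ncard ≤ 4 * t ^ 2) ∨ ∃ A Y, IsSetPretransversal G 𝓑 t A Y := by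
  by_cases hhit : IsHittingSet 𝓑 {z | z ∈ C.support}
  · exact Or.inl ⟨_, hhit, by rwa [ncard_support_of_isCycle hC]⟩
  simp only [IsHittingSet, not_forall, not_not] at hhit
  obtain ⟨R, hR, hRC⟩ := hhit
  obtain ⟨Y, hY, hsep⟩ := (hcover R hR).exists_not_linkedIn_cycle_of_le ht hV hm hC hRC.symm hL
  rcases h𝓑.forall_disjoint_or_of_separates hsep with h | h
  · refine Or.inr ⟨{z | z ∈ C.support}, Y, ⟨u, C.start_mem_support⟩,
      fun z => mem_support_of_mem_cycle hC, ?_, h⟩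
    rw [ncard_support_of_isCycle hC]
    nlinarith
  · exact Or.inl ⟨Y, fun U hU hUY => h𝓑.intersecting hU hR (h U hU hUY), by nlinarith⟩

theorem exists_isHittingSet_or_isSetPretransversal (h𝓑 : IsIntersectingBramble G 𝓑)
    (hcover : ∀ R ∈ 𝓑, HasDetourCover G m R) (ht : 1 < t) (hV : Nat.card V ≤ t ^ 3)
    (hm : m ≤ t) :
    (∃ S, IsHittingSet 𝓑 S ∧ S.ncard ≤ 4 * t ^ 2) ∨ ∃ A Y, IsSetPretransversal G 𝓑 t A Y := by
  by_cases hlong : ∃ (v : V) (D : G.Walk v v), D.IsCycle ∧ ⌈2 * t ^ 2⌉₊ ≤ D.length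
  · obtain ⟨u, C, hC⟩ := exists_isShortestLongCycle hlong
    rcases lt_or_ge (4 * t ^ 2) (C.length : ℝ) with hL | hL
    · exact Or.inr (exists_isSetPretransversal_of_long_cycle h𝓑 ht hV hC hL)
    · exact h𝓑.exists_isHittingSet_or_isSetPretransversal_of_cycle hcover ht hV hm hC.isCycle
        (Nat.ceil_le.1 hC.le_length) hL
  · push Not at hlong
    have ht2 : 1 < t ^ 2 := one_lt_pow₀ ht two_ne_zero
    have hN : 2 ≤ ⌈2 * t ^ 2⌉₊ := (Nat.lt_ceil.2 (by push_cast; linarith) : 1 < _)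
    obtain ⟨S, hS, hSN⟩ := h𝓑.exists_isHittingSet_of_no_long_cycle hN hlong
    refine Or.inl ⟨S, hS, ?_⟩
    calc (S.ncard : ℝ)
      _ ≤ ⌈2 * t ^ 2⌉₊ := by exact_mod_cast hSN
      _ ≤ 2 * t ^ 2 + 1 := (Nat.ceil_lt_add_one (by positivity)).le
      _ ≤ 4 * t ^ 2 := by linarith

/-- Peel off pretransversals `(A, Y)` one after another: putting `Y` into the hitting set disposes
of all of `A`, at a price of `1 / t` per vertex. -/
theorem exists_isHittingSet_disjoint (h𝓑 : IsIntersectingBramble G 𝓑)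
    (hcover : ∀ R ∈ 𝓑, HasDetourCover G m R) (ht : 1 < t) (hV : Nat.card V ≤ t ^ 3)
    (hm : m ≤ t) (Z : Set V) :
    ∃ S, IsHittingSet {U ∈ 𝓑 | Disjoint U Z} S ∧ S.ncard ≤ 4 * t ^ 2 + Zᶜ.ncard / t := by
  induction hk : Zᶜ.ncard using Nat.strong_induction_on generalizing Z with
  | _ k ih =>
  have ht0 : 0 < t := one_pos.trans ht
  rcases (h𝓑.isolate Z).exists_isHittingSet_or_isSetPretransversal
    (fun R hR => (hcover R hR.1).anti (isolate_le G Z)) ht hV hm with ⟨S, hS, hcard⟩ | ⟨A, Y, hAY⟩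
  · exact ⟨S, hS, hcard.trans (le_add_of_nonneg_right (by positivity))⟩
  have hAZ : A ⊆ Zᶜ := hAY.subset_support.trans support_isolate_subset
  have hsum : (Z ∪ A)ᶜ.ncard + A.ncard = k := by
    rw [← hk, Set.compl_union, ← Set.sdiff_eq]
    exact Set.ncard_sdiff_add_ncard_of_subset hAZ
  have hA : 0 < A.ncard := (Set.ncard_pos).2 hAY.nonempty
  obtain ⟨S, hS, hcard⟩ := ih _ (by omega) (Z ∪ A) rfl
  refine ⟨S ∪ Y, fun U hU hUSY => ?_, ?_⟩
  · obtain ⟨hUS, hUY⟩ := Set.disjoint_union_right.1 hUSY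
    exact hS U ⟨hU.1, hU.2.union_right (hAY.disjoint U hU hUY)⟩ hUS
  · have hY : (Y.ncard : ℝ) ≤ A.ncard / t := by
      rw [le_div_iff₀' ht0]
      exact hAY.mul_ncard_le
    calc ((S ∪ Y).ncard : ℝ)
      _ ≤ S.ncard + Y.ncard := by exact_mod_cast Set.ncard_union_le S Y
      _ ≤ 4 * t ^ 2 + (Z ∪ A)ᶜ.ncard / t + A.ncard / t := by gcongr
      _ = 4 * t ^ 2 + k / t := by rw [← hsum]; push_cast; ring

theorem exists_isHittingSet (h𝓑 : IsIntersectingBramble G 𝓑)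
    (hcover : ∀ R ∈ 𝓑, HasDetourCover G m R) (ht : 1 < t) (hV : Nat.card V ≤ t ^ 3)
    (hm : m ≤ t) : ∃ S, IsHittingSet 𝓑 S ∧ S.ncard ≤ 5 * t ^ 2 := by
  obtain ⟨S, hS, hcard⟩ := h𝓑.exists_isHittingSet_disjoint hcover ht hV hm ∅
  refine ⟨S, fun U hU => hS U ⟨hU, Set.disjoint_empty U⟩, ?_⟩
  calc (S.ncard : ℝ)
    _ ≤ 4 * t ^ 2 + Nat.card V / t := by simpa [Set.ncard_univ] using hcard
    _ ≤ 4 * t ^ 2 + t ^ 3 / t := by gcongr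
    _ = 5 * t ^ 2 := by field_simp; ring

end IsIntersectingBramble

end HittingSets

/-! ### Rerouting paths and cycles -/

section Rerouting

variable {V : Type*} {G : SimpleGraph V} {R : Set V} {a b x y z w : V}

theorem isCycle_copy_iff {p : G.Walk x y} (h : y = x) :
    (p.copy rfl h).IsCycle ↔ p.support.tail.Nodup ∧ 3 ≤ p.length := by
  subst h
  rw [Walk.copy_rfl_rfl, Walk.isCycle_iff_isPath_tail_and_le_length, Walk.isPath_def]
  refine and_congr_left fun h3 => ?_
  rw [Walk.support_tail_of_not_nil]
  intro hnil
  rw [← Walk.length_eq_zero_iff] at hnil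
  omega

theorem exists_eq_append_append (p : G.Walk x y) {i j : ℕ} (hij : i ≤ j) (hj : j ≤ p.length) :
    ∃ (p₁ : G.Walk x (p.getVert i)) (c : G.Walk (p.getVert i) (p.getVert j))
      (p₂ : G.Walk (p.getVert j) y), p = p₁.append (c.append p₂) ∧ c.length = j - i := by
  have h : (p.drop i).getVert (j - i) = p.getVert j := by
    rw [Walk.drop_getVert, Nat.add_sub_cancel' hij]
  refine ⟨p.take i, ((p.drop i).take (j - i)).copy rfl h,
    ((p.drop i).drop (j - i)).copy h rfl, ?_, ?_⟩
  · rw [Walk.append_copy_copy, Walk.copy_rfl_rfl, Walk.append_take_drop_eq,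
      Walk.append_take_drop_eq]
  · rw [Walk.length_copy, Walk.take_length, Walk.drop_length]
    omega

theorem IsDetour.notMem_or_notMem {d : G.Walk x y} (hd : IsDetour R d) (hlen : 2 ≤ d.length)
    (hab : s(a, b) ∈ d.edges) : a ∉ R ∨ b ∉ R := by
  by_contra! h
  have hne : a ≠ b := (d.adj_of_mem_edges hab).ne
  have ha := hd.eq_or_eq a (d.fst_mem_support_of_mem_edges hab) h.1
  have hb := hd.eq_or_eq b (d.snd_mem_support_of_mem_edges hab) h.2
  have hxy : s(x, y) = s(a, b) := by grind
  have := hd.isPath.length_eq_one_of_mem_edges (hxy ▸ hab)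
  omega

/-- A walk that is a cycle if its ends agree and a path otherwise: what a subdivision puts in place
of a loop, respectively of any other edge. -/
structure IsPathOrCycle (p : G.Walk x y) : Prop where
  isCycle : ∀ h : y = x, (p.copy rfl h).IsCycle
  isPath : x ≠ y → p.IsPath

namespace IsPathOrCycle

theorem edges_nodup {p : G.Walk x y} (hp : IsPathOrCycle p) : p.edges.Nodup := by
  by_cases h : y = x
  · simpa using (hp.isCycle h).edges_nodup
  · exact (hp.isPath (Ne.symm h)).edges_nodup

theorem length_le_ncard_sdiff {p : G.Walk x y} (hp : IsPathOrCycle p) :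
    p.length ≤ ({z | z ∈ p.support} \ {x, y}).ncard + 1 := by
  have hle := Set.ncard_le_ncard_sdiff_add_ncard {z | z ∈ p.support} {x, y}
  by_cases h : y = x
  · subst h
    have hC : p.IsCycle := hp.isCycle rfl
    simpa [ncard_support_of_isCycle hC] using hle
  · have hsupp : {z | z ∈ p.support}.ncard = p.length + 1 := by
      classical
      rw [← List.coe_toFinset, Set.ncard_coe_finset,
        List.toFinset_card_of_nodup (hp.isPath (Ne.symm h)).support_nodup, Walk.length_support]
    rw [hsupp, Set.ncard_pair (Ne.symm h)] at hle
    omega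

theorem reroute {p₁ : G.Walk x z} {c d : G.Walk z w} {p₂ : G.Walk w y}
    (hp : IsPathOrCycle (p₁.append (c.append p₂))) (hzw : z ≠ w)
    (hd : IsDetour {v | v ∈ p₁.support ∨ v ∈ p₂.support} d) (hlen : c.length ≤ d.length) :
    IsPathOrCycle (p₁.append (d.append p₂)) := by
  have hw : w ∈ c.support.tail := c.end_mem_tail_support_of_ne hzw
  have hz : z ∉ d.support.tail :=
    (List.nodup_cons.1 (d.cons_tail_support ▸ hd.isPath.support_nodup)).1
  have hd_nodup : d.support.tail.Nodup := hd.isPath.support_nodup.tail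
  have hd_eq : ∀ v ∈ d.support.tail, v ∈ p₁.support ∨ v ∈ p₂.support → v = w := fun v hv hv' =>
    (hd.eq_or_eq v (List.mem_of_mem_tail hv) hv').resolve_left fun h => hz (h ▸ hv)
  constructor
  · intro h
    obtain ⟨hnodup, h3⟩ := (isCycle_copy_iff h).1 (hp.isCycle h)
    refine (isCycle_copy_iff h).2 ⟨?_, ?_⟩
    · simp only [Walk.tail_support_append] at hnodup ⊢
      grind [List.nodup_append, List.mem_of_mem_tail]
    · simp only [Walk.length_append] at h3 ⊢
      omega
  · intro h
    have hnodup := (hp.isPath h).support_nodup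
    rw [Walk.isPath_def]
    simp only [Walk.support_append] at hnodup ⊢
    grind [List.nodup_append, List.mem_of_mem_tail]

end IsPathOrCycle

end Rerouting

section Pairwise

variable {ι : Type*} [DecidableEq ι] {β : ι → Type*}

theorem forall_ne_update_of_symm {r : ∀ i j, β i → β j → Prop}
    (hr : ∀ {i j x y}, r i j x y → r j i y x) {f : ∀ i, β i}
    (hf : ∀ i j, i ≠ j → r i j (f i) (f j)) {i : ι} {x : β i} (hx : ∀ j, j ≠ i → r i j x (f j)) :
    ∀ j k, j ≠ k → r j k (Function.update f i x j) (Function.update f i x k) := by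
  intro j k hjk
  by_cases hj : j = i
  · subst hj
    simpa [hjk.symm] using hx k hjk.symm
  · by_cases hk : k = i
    · subst hk
      simpa [hj] using hr (hx j hj)
    · simpa [hj, hk] using hf j k hjk

end Pairwise

/-! ### Subdivisions -/

section Subdivisions

variable {V W F : Type*} {M : Multigraph W F} {G : SimpleGraph V}

namespace Multigraph

theorem Connected.subsingleton [IsEmpty F] (hM : M.Connected) : Subsingleton W where
  allEq u v := by
    rcases (hM.2 u v).cases_head with rfl | ⟨_, ⟨e, -⟩, -⟩
    · rfl
    · exact isEmptyElim e

theorem Connected.exists_mem_ends [Nonempty F] (hM : M.Connected) (w : W) :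
    ∃ e, w ∈ M.ends e := by
  obtain ⟨e⟩ := ‹Nonempty F›
  induction h : M.ends e with
  | _ u v =>
  rcases (hM.2 w u).cases_head with rfl | ⟨x, ⟨e', he'⟩, -⟩
  · exact ⟨e, h ▸ Sym2.mem_mk_left w v⟩
  · exact ⟨e', he' ▸ Sym2.mem_mk_left w x⟩

end Multigraph

/-- A way of realising a subdivision of `M` in `G`: `branch` places the vertices of `M`, and
`path e` is what the edge `e` is subdivided into. -/
structure SubdivisionModel (M : Multigraph W F) (G : SimpleGraph V) where
  branch : W → V
  fst : F → W
  snd : F → W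
  path : ∀ e, G.Walk (branch (fst e)) (branch (snd e))
  branch_injective : Function.Injective branch
  ends_eq : ∀ e, M.ends e = s(fst e, snd e)
  isPathOrCycle : ∀ e, IsPathOrCycle (path e)
  eq_or_eq : ∀ e, ∀ x ∈ (path e).support, x ∈ Set.range branch →
    x = branch (fst e) ∨ x = branch (snd e)
  mem_range : ∀ e e', e ≠ e' → ∀ x, x ∈ (path e).support → x ∈ (path e').support →
    x ∈ Set.range branch
  disjoint_edges : ∀ e e', e ≠ e' → (path e).edges.Disjoint (path e').edges

namespace SubdivisionModel

/-- The subdivision realised by a model, as a subgraph. -/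
def toSubgraph (D : SubdivisionModel M G) : G.Subgraph where
  verts := Set.range D.branch ∪ ⋃ e, {x | x ∈ (D.path e).support}
  Adj x y := ∃ e, (D.path e).toSubgraph.Adj x y
  adj_sub := fun ⟨_, h⟩ => h.adj_sub
  edge_vert := fun ⟨e, h⟩ => Or.inr (Set.mem_iUnion.2
    ⟨e, (D.path e).mem_verts_toSubgraph.1 h.fst_mem⟩)
  symm := ⟨fun _ _ ⟨e, h⟩ => ⟨e, h.symm⟩⟩

theorem isSubdivisionIn_iff {Q : G.Subgraph} :
    IsSubdivisionIn M G Q ↔ ∃ D : SubdivisionModel M G, D.toSubgraph = Q := by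
  constructor
  · rintro ⟨b, u, v, P, hb, hends, hcycle, hpath, hbranch, hvert, hedge, hverts, hadj⟩
    refine ⟨⟨b, u, v, P, hb, hends, fun e => ⟨fun h => hcycle e (hb h).symm,
      fun h => hpath e (h <| congrArg b ·)⟩, hbranch, hvert,
      fun e e' h a ha => hedge e e' h a ha⟩, ?_⟩
    ext x y
    · rw [hverts]; rfl
    · rw [hadj]; rfl
  · rintro ⟨D, rfl⟩
    exact ⟨D.branch, D.fst, D.snd, D.path, D.branch_injective, D.ends_eq,
      fun e h => (D.isPathOrCycle e).isCycle (congrArg D.branch h.symm),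
      fun e h => (D.isPathOrCycle e).isPath (D.branch_injective.ne h), D.eq_or_eq, D.mem_range,
      fun e e' h a ha => D.disjoint_edges e e' h ha, rfl, fun _ _ => Iff.rfl⟩

theorem mem_verts_of_mem_support (D : SubdivisionModel M G) {e : F} {x : V}
    (hx : x ∈ (D.path e).support) : x ∈ D.toSubgraph.verts :=
  Or.inr (Set.mem_iUnion.2 ⟨e, hx⟩)

theorem branch_mem_verts (D : SubdivisionModel M G) (w : W) : D.branch w ∈ D.toSubgraph.verts :=
  Or.inl (Set.mem_range_self w)

theorem verts_toSubgraph_of_nonempty [Nonempty F] (D : SubdivisionModel M G) (hM : M.Connected) :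
    D.toSubgraph.verts = ⋃ e, {x | x ∈ (D.path e).support} := by
  refine Set.union_eq_self_of_subset_left ?_
  rintro _ ⟨w, rfl⟩
  obtain ⟨e, he⟩ := hM.exists_mem_ends w
  rw [D.ends_eq e] at he
  rcases Sym2.mem_iff.1 he with rfl | rfl
  · exact Set.mem_iUnion.2 ⟨e, (D.path e).start_mem_support⟩
  · exact Set.mem_iUnion.2 ⟨e, (D.path e).end_mem_support⟩

theorem ncard_edgeSet [Fintype F] (D : SubdivisionModel M G) :
    D.toSubgraph.edgeSet.ncard = ∑ e, (D.path e).length := by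
  have hunion : D.toSubgraph.edgeSet = ⋃ e, {a | a ∈ (D.path e).edges} := by
    ext a
    induction a with
    | _ x y =>
    rw [Subgraph.mem_edgeSet, Set.mem_iUnion]
    refine exists_congr fun e => ?_
    rw [← Subgraph.mem_edgeSet, Walk.mem_edges_toSubgraph]
    rfl
  have hlength : ∀ e, {a | a ∈ (D.path e).edges}.ncard = (D.path e).length := fun e => by
    classical
    rw [← List.coe_toFinset, Set.ncard_coe_finset,
      List.toFinset_card_of_nodup (D.isPathOrCycle e).edges_nodup, Walk.length_edges]
  rw [hunion, Set.ncard_iUnion_of_finite (fun e => List.finite_toSet _) fun e e' h =>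
    Set.disjoint_left.2 (D.disjoint_edges e e' h), finsum_eq_sum_of_fintype]
  simp only [hlength]

/-- The vertices of `path e` other than its ends. -/
def interior (D : SubdivisionModel M G) (e : F) : Set V :=
  {x | x ∈ (D.path e).support} \ Set.range D.branch

theorem disjoint_interior (D : SubdivisionModel M G) :
    Pairwise (Function.onFun Disjoint D.interior) :=
  fun e e' h => Set.disjoint_left.2 fun x hx hx' => hx.2 (D.mem_range e e' h x hx.1 hx'.1)

theorem length_le_ncard_interior [Finite V] (D : SubdivisionModel M G) (e : F) :
    (D.path e).length ≤ (D.interior e).ncard + 1 := by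
  have hsub : {x | x ∈ (D.path e).support} \ {D.branch (D.fst e), D.branch (D.snd e)} ⊆
      D.interior e := fun x hx => ⟨hx.1, fun hxb => hx.2 (D.eq_or_eq e x hx.1 hxb)⟩
  exact (D.isPathOrCycle e).length_le_ncard_sdiff.trans
    (Nat.add_le_add_right (Set.ncard_le_ncard hsub) 1)

theorem sum_length_le [Fintype F] [Finite V] (D : SubdivisionModel M G) :
    ∑ e, (D.path e).length ≤ Nat.card V + Fintype.card F :=
  calc ∑ e, (D.path e).length
    _ ≤ ∑ e, ((D.interior e).ncard + 1) := Finset.sum_le_sum fun e _ => D.length_le_ncard_interior e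
    _ = (⋃ e, D.interior e).ncard + Fintype.card F := by
      rw [Set.ncard_iUnion_of_finite (fun _ => Set.toFinite _) D.disjoint_interior,
        finsum_eq_sum_of_fintype, Finset.sum_add_distrib, Finset.sum_const, Finset.card_univ,
        smul_eq_mul, mul_one]
    _ ≤ Nat.card V + Fintype.card F := by
      gcongr
      exact Set.ncard_le_card _

theorem reachableIn_of_mem_support (D : SubdivisionModel M G) {e : F} {x y : V}
    (hx : x ∈ (D.path e).support) (hy : y ∈ (D.path e).support) :
    ReachableIn G D.toSubgraph.verts x y := by
  have hsupp : ∀ z ∈ (D.path e).support, z ∈ D.toSubgraph.verts :=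
    fun z => D.mem_verts_of_mem_support
  exact (ReachableIn.of_mem_support hsupp hx).symm.trans (ReachableIn.of_mem_support hsupp hy)

theorem reachableIn_branch (D : SubdivisionModel M G) (hM : M.Connected) (w w' : W) :
    ReachableIn G D.toSubgraph.verts (D.branch w) (D.branch w') := by
  induction hM.2 w w' with
  | refl => exact ReachableIn.refl (D.branch_mem_verts w)
  | tail _ hadj ih =>
    obtain ⟨e, he⟩ := hadj
    refine ih.trans ?_
    rcases Sym2.eq_iff.1 ((D.ends_eq e).symm.trans he) with ⟨rfl, rfl⟩ | ⟨rfl, rfl⟩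
    · exact D.reachableIn_of_mem_support (D.path e).start_mem_support (D.path e).end_mem_support
    · exact D.reachableIn_of_mem_support (D.path e).end_mem_support (D.path e).start_mem_support

theorem preconnected_induce_verts (D : SubdivisionModel M G) (hM : M.Connected) :
    (G.induce D.toSubgraph.verts).Preconnected := by
  have hbranch : ∀ x ∈ D.toSubgraph.verts,
      ∃ w, ReachableIn G D.toSubgraph.verts x (D.branch w) := by
    rintro x (⟨w, rfl⟩ | hx)
    · exact ⟨w, ReachableIn.refl (D.branch_mem_verts w)⟩
    · obtain ⟨e, he⟩ := Set.mem_iUnion.1 hx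
      exact ⟨D.fst e, D.reachableIn_of_mem_support he (D.path e).start_mem_support⟩
  refine preconnected_induce_iff_reachableIn.2 fun x hx y hy => ?_
  obtain ⟨w, hw⟩ := hbranch x hx
  obtain ⟨w', hw'⟩ := hbranch y hy
  exact (hw.trans (D.reachableIn_branch hM w w')).trans hw'.symm

/-- Replace the path of `D` belonging to the edge `e` by `p`. -/
def replacePath [DecidableEq F] (D : SubdivisionModel M G) (e : F)
    (p : G.Walk (D.branch (D.fst e)) (D.branch (D.snd e))) (hp : IsPathOrCycle p)
    (hsupp : ∀ x ∈ p.support, x ∈ D.toSubgraph.verts → x ∈ (D.path e).support)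
    (hedge : ∀ e', e' ≠ e → p.edges.Disjoint (D.path e').edges) : SubdivisionModel M G where
  branch := D.branch
  fst := D.fst
  snd := D.snd
  path := Function.update D.path e p
  branch_injective := D.branch_injective
  ends_eq := D.ends_eq
  isPathOrCycle := (Function.forall_update_iff D.path fun _ q => IsPathOrCycle q).2
    ⟨hp, fun e' _ => D.isPathOrCycle e'⟩
  eq_or_eq := (Function.forall_update_iff D.path fun e' q => ∀ x ∈ q.support,
      x ∈ Set.range D.branch → x = D.branch (D.fst e') ∨ x = D.branch (D.snd e')).2
    ⟨fun x hx hxb => D.eq_or_eq e x (hsupp x hx (Or.inl hxb)) hxb, fun e' _ => D.eq_or_eq e'⟩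
  mem_range := forall_ne_update_of_symm
    (β := fun e => G.Walk (D.branch (D.fst e)) (D.branch (D.snd e)))
    (r := fun _ _ q q' => ∀ x, x ∈ q.support → x ∈ q'.support → x ∈ Set.range D.branch)
    (fun h x hx hx' => h x hx' hx) D.mem_range fun e' h x hx hx' =>
      D.mem_range e e' h.symm x (hsupp x hx (D.mem_verts_of_mem_support hx')) hx'
  disjoint_edges := forall_ne_update_of_symm
    (β := fun e => G.Walk (D.branch (D.fst e)) (D.branch (D.snd e)))
    (r := fun _ _ q q' => q.edges.Disjoint q'.edges)
    (fun h => h.symm) D.disjoint_edges hedge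

theorem length_le_of_isMaxSubdivisionIn [Finite F] {D : SubdivisionModel M G}
    (hmax : IsMaxSubdivisionIn M G ⊤ D.toSubgraph) {e : F}
    {p : G.Walk (D.branch (D.fst e)) (D.branch (D.snd e))} (hp : IsPathOrCycle p)
    (hsupp : ∀ x ∈ p.support, x ∈ D.toSubgraph.verts → x ∈ (D.path e).support)
    (hedge : ∀ e', e' ≠ e → p.edges.Disjoint (D.path e').edges) :
    p.length ≤ (D.path e).length := by
  classical
  have := Fintype.ofFinite F
  by_contra! hlt
  let D' := D.replacePath e p hp hsupp hedge
  have hself : (D'.path e).length = p.length := by simp [D', replacePath]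
  have hother : ∀ e', e' ≠ e → (D'.path e').length = (D.path e').length := fun e' h => by
    simp [D', replacePath, h]
  have hle : ∑ e, (D'.path e).length ≤ ∑ e, (D.path e).length := by
    rw [← ncard_edgeSet, ← ncard_edgeSet]
    exact hmax.2.2 _ (isSubdivisionIn_iff.2 ⟨D', rfl⟩) le_top
  refine hle.not_gt (Finset.sum_lt_sum (fun e' _ => ?_) ⟨e, Finset.mem_univ e, hself ▸ hlt⟩)
  obtain rfl | h := eq_or_ne e' e
  · exact hself ▸ hlt.le
  · exact (hother e' h).ge

theorem length_le_of_isDetour [Finite F] {D : SubdivisionModel M G}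
    (hmax : IsMaxSubdivisionIn M G ⊤ D.toSubgraph) {e : F} {x y : V}
    {p₁ : G.Walk (D.branch (D.fst e)) x} {c d : G.Walk x y} {p₂ : G.Walk y (D.branch (D.snd e))}
    (hP : D.path e = p₁.append (c.append p₂)) (hxy : x ≠ y)
    (hd : IsDetour D.toSubgraph.verts d) : d.length ≤ c.length := by
  by_contra! hlt
  have hc : c.length ≠ 0 := fun h => hxy (Walk.eq_of_length_eq_zero h)
  have hsupp_path : ∀ z, z ∈ (D.path e).support ↔
      z ∈ p₁.support ∨ z ∈ c.support ∨ z ∈ p₂.support := by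
    simp only [hP, Walk.mem_support_append_iff, implies_true]
  have hp : IsPathOrCycle (p₁.append (d.append p₂)) :=
    (hP ▸ D.isPathOrCycle e).reroute hxy ⟨hd.isPath, fun z hz hz' => hd.eq_or_eq z hz
      (D.mem_verts_of_mem_support ((hsupp_path z).2 (hz'.imp_right Or.inr)))⟩ hlt.le
  have hlen := length_le_of_isMaxSubdivisionIn hmax hp ?_ ?_
  · rw [hP] at hlen
    simp only [Walk.length_append] at hlen
    omega
  · intro z hz hzD
    simp only [Walk.mem_support_append_iff] at hz
    rw [hsupp_path]
    rcases hz with hz | hz | hz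
    · exact Or.inl hz
    · rcases hd.eq_or_eq z hz hzD with rfl | rfl
      exacts [Or.inl p₁.end_mem_support, Or.inr (Or.inr p₂.start_mem_support)]
    · exact Or.inr (Or.inr hz)
  · intro e' he' a ha ha'
    have hnot : a ∉ (D.path e).edges := fun h => D.disjoint_edges e' e he' ha' h
    have had : a ∈ d.edges := by
      simp only [hP, Walk.edges_append, List.mem_append] at ha hnot
      tauto
    induction a with
    | _ s r =>
    rcases hd.notMem_or_notMem (by omega) had with h | h
    · exact h (D.mem_verts_of_mem_support ((D.path e').fst_mem_support_of_mem_edges ha'))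
    · exact h (D.mem_verts_of_mem_support ((D.path e').snd_mem_support_of_mem_edges ha'))

end SubdivisionModel

end Subdivisions

/-! ### Maximum subdivisions -/

section Segments

variable {V : Type*} {G : SimpleGraph V} {x y : V}

/-- The vertices of `p` with indices `q * ℓ, …, q * ℓ + ℓ - 1`. -/
def walkSegment (p : G.Walk x y) (ℓ q : ℕ) : Set V :=
  {z | ∃ i ≤ p.length, i / ℓ = q ∧ p.getVert i = z}

theorem mem_support_iff_exists_mem_walkSegment {p : G.Walk x y} {z : V} (ℓ : ℕ) :
    z ∈ p.support ↔ ∃ q ∈ Finset.range (p.length / ℓ + 1), z ∈ walkSegment p ℓ q := by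
  constructor
  · intro hz
    obtain ⟨i, rfl, hi⟩ := Walk.mem_support_iff_exists_getVert.1 hz
    exact ⟨i / ℓ, Finset.mem_range_succ_iff.2 (Nat.div_le_div_right hi), i, hi, rfl, rfl⟩
  · rintro ⟨_, -, i, -, -, rfl⟩
    exact p.getVert_mem_support i

theorem HasDetourCover.of_subsingleton {R : Set V} (hR : R.Subsingleton) :
    HasDetourCover G 1 R := by
  refine fun ℓ _ => ⟨{R}, ?_, by simp, fun T hT x y hx hy hxy => ?_⟩
  · rw [Finset.card_singleton]
    omega
  · rw [Finset.mem_singleton.1 hT] at hx hy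
    exact (hxy (hR hx hy)).elim

theorem HasDetourCover.mono {R : Set V} {m m' : ℕ} (hm : m ≤ m') (h : HasDetourCover G m R) :
    HasDetourCover G m' R := fun ℓ hℓ => by
  obtain ⟨𝓟, hcard, h𝓟⟩ := h ℓ hℓ
  exact ⟨𝓟, hcard.trans (by gcongr), h𝓟⟩

end Segments

section MaximumSubdivisions

variable {V W F : Type*} {M : Multigraph W F} {G : SimpleGraph V}

namespace SubdivisionModel

variable {D : SubdivisionModel M G}

theorem hasShortDetours_walkSegment [Finite F] (hmax : IsMaxSubdivisionIn M G ⊤ D.toSubgraph)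
    {ℓ : ℕ} (hℓ : 0 < ℓ) (e : F) (q : ℕ) :
    HasShortDetours G D.toSubgraph.verts (walkSegment (D.path e) ℓ q) ℓ := by
  rintro _ _ ⟨i, hi, hiq, rfl⟩ ⟨j, hj, hjq, rfl⟩ hne d hd
  wlog hij : i ≤ j generalizing i j
  · rw [← Walk.length_reverse]
    exact this j hj hjq i hi hiq hne.symm d.reverse hd.reverse (by omega)
  obtain ⟨p₁, c, p₂, hP, hc⟩ := exists_eq_append_append (D.path e) hij hj
  have hle := length_le_of_isDetour hmax hP hne hd
  have hi_mod := Nat.div_add_mod i ℓ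
  have hj_mod := Nat.div_add_mod j ℓ
  have hj_lt := Nat.mod_lt j hℓ
  rw [hiq] at hi_mod
  rw [hjq] at hj_mod
  omega

theorem hasDetourCover_of_nonempty [Finite V] [Fintype F] [Nonempty F] (hM : M.Connected)
    (hmax : IsMaxSubdivisionIn M G ⊤ D.toSubgraph) :
    HasDetourCover G (Fintype.card F) D.toSubgraph.verts := by
  classical
  intro ℓ hℓ
  refine ⟨Finset.univ.biUnion fun e => (Finset.range ((D.path e).length / ℓ + 1)).image
    (walkSegment (D.path e) ℓ), ?_, ?_, fun T hT => ?_⟩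
  · calc _ ≤ (∑ e, ((D.path e).length / ℓ + 1)) * ℓ := by
          gcongr
          exact Finset.card_biUnion_le.trans (Finset.sum_le_sum fun e _ =>
            Finset.card_image_le.trans_eq (Finset.card_range _))
      _ = ∑ e, ((D.path e).length / ℓ * ℓ + ℓ) := by simp only [Finset.sum_mul, add_one_mul]
      _ ≤ ∑ e, ((D.path e).length + ℓ) := by
          gcongr
          exact Nat.div_mul_le_self _ _
      _ = ∑ e, (D.path e).length + Fintype.card F * ℓ := by simp [Finset.sum_add_distrib]
      _ ≤ Nat.card V + Fintype.card F + Fintype.card F * ℓ := by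
          gcongr
          exact D.sum_length_le
  · ext x
    simp [D.verts_toSubgraph_of_nonempty hM, mem_support_iff_exists_mem_walkSegment ℓ]
  · simp only [Finset.mem_biUnion, Finset.mem_image] at hT
    obtain ⟨e, -, q, -, rfl⟩ := hT
    exact hasShortDetours_walkSegment hmax hℓ e q

theorem hasDetourCover [Finite V] [Fintype F] (hM : M.Connected)
    (hmax : IsMaxSubdivisionIn M G ⊤ D.toSubgraph) :
    HasDetourCover G (max (Fintype.card F) 1) D.toSubgraph.verts := by
  rcases isEmpty_or_nonempty F with _ | _
  · have := hM.subsingleton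
    have hverts : D.toSubgraph.verts.Subsingleton := by
      simpa [toSubgraph] using Set.subsingleton_range D.branch
    exact (HasDetourCover.of_subsingleton hverts).mono (le_max_right _ _)
  · exact (hasDetourCover_of_nonempty hM hmax).mono (le_max_left _ _)

end SubdivisionModel

/-- The vertex sets of the members of `L(M,G)`. -/
def maxSubdivisionVerts (M : Multigraph W F) (G : SimpleGraph V) : Set (Set V) :=
  Subgraph.verts '' {Q | IsMaxSubdivisionIn M G ⊤ Q}

theorem isIntersectingBramble_maxSubdivisionVerts (hM : M.Connected)
    (hpi : PairwiseIntersectingIn M G ⊤) : IsIntersectingBramble G (maxSubdivisionVerts M G) where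
  preconnected := by
    rintro _ ⟨Q, hQ, rfl⟩
    obtain ⟨D, rfl⟩ := SubdivisionModel.isSubdivisionIn_iff.1 hQ.1
    exact D.preconnected_induce_verts hM
  intersecting := by
    rintro _ ⟨Q, hQ, rfl⟩ _ ⟨R, hR, rfl⟩
    exact Set.not_disjoint_iff_nonempty_inter.2 (hpi Q R hQ hR)

theorem hasDetourCover_of_mem_maxSubdivisionVerts [Finite V] [Fintype F] (hM : M.Connected)
    {R : Set V} (hR : R ∈ maxSubdivisionVerts M G) :
    HasDetourCover G (max (Fintype.card F) 1) R := by
  obtain ⟨Q, hQ, rfl⟩ := hR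
  obtain ⟨D, rfl⟩ := SubdivisionModel.isSubdivisionIn_iff.1 hQ.1
  exact D.hasDetourCover hM hQ

theorem IsHittingSet.isTransversalIn {S : Set V} (hS : IsHittingSet (maxSubdivisionVerts M G) S) :
    IsTransversalIn M G ⊤ S := fun Q hQ =>
  Set.not_disjoint_iff_nonempty_inter.1 fun h => hS Q.verts ⟨Q, hQ, rfl⟩ h.symm

theorem exists_isTransversalIn_ncard_le [Finite V] [Fintype F] (hM : M.Connected)
    (hpi : PairwiseIntersectingIn M G ⊤) {t : ℝ} (hV : Nat.card V ≤ t ^ 3)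
    (hF : Fintype.card F ≤ t) :
    ∃ S, IsTransversalIn M G ⊤ S ∧ S.ncard ≤ 5 * t ^ 2 := by
  rcases le_or_gt t 1 with ht1 | ht1
  · refine ⟨Set.univ, fun Q hQ => by simpa using hpi Q Q hQ hQ, ?_⟩
    rw [Set.ncard_univ]
    nlinarith [mul_le_mul_of_nonneg_right ht1 (sq_nonneg t)]
  · obtain ⟨S, hS, hcard⟩ := (isIntersectingBramble_maxSubdivisionVerts hM hpi).exists_isHittingSet
      (fun R => hasDetourCover_of_mem_maxSubdivisionVerts hM) ht1 hV
      (by simpa using ⟨hF, ht1.le⟩)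
    exact ⟨S, hS.isTransversalIn, hcard⟩

theorem sq_le_rpow_two_thirds {m n : ℕ} (h : m ^ 3 ≤ n) :
    (m : ℝ) ^ 2 ≤ (n : ℝ) ^ ((2 : ℝ) / 3) := by
  calc (m : ℝ) ^ 2
    _ = ((m : ℝ) ^ 3) ^ ((2 : ℝ) / 3) := by
      rw [← Real.rpow_natCast_mul (by positivity)]
      norm_num
    _ ≤ (n : ℝ) ^ ((2 : ℝ) / 3) := by
      gcongr
      exact_mod_cast h

theorem gallai_stmt1_general [Fintype V] [Fintype F] (M : Multigraph W F) (hM : M.Connected)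
    (G : SimpleGraph V) (hpi : PairwiseIntersectingIn M G ⊤) :
    ∃ S : Set V, IsTransversalIn M G ⊤ S ∧ (S.ncard : ℝ) ≤
      5 * max ((Fintype.card V : ℝ) ^ ((2 : ℝ) / 3)) ((Fintype.card F : ℝ) ^ 2) := by
  obtain ⟨r, hr⟩ : ∃ r : ℝ, r = (Fintype.card V : ℝ) ^ ((1 : ℝ) / 3) := ⟨_, rfl⟩
  have hr0 : 0 ≤ r := hr ▸ by positivity
  have hF0 : (0 : ℝ) ≤ Fintype.card F := by positivity
  have hr2 : (Fintype.card V : ℝ) ^ ((2 : ℝ) / 3) = r ^ 2 := by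
    rw [hr, ← Real.rpow_mul_natCast (by positivity)]
    norm_num
  have hr3 : (Nat.card V : ℝ) = r ^ 3 := by
    rw [hr, ← Real.rpow_mul_natCast (by positivity)]
    norm_num
  obtain ⟨S, hS, hcard⟩ := exists_isTransversalIn_ncard_le hM hpi
    (t := max r (Fintype.card F))
    (hr3.trans_le (pow_le_pow_left₀ hr0 (le_max_left _ _) 3)) (le_max_right _ _)
  refine ⟨S, hS, hcard.trans_eq ?_⟩
  rw [hr2, (pow_left_monotoneOn (n := 2)).map_max hr0 hF0]

end MaximumSubdivisions

/-- If `L(M,G)` is pairwise intersecting, `m^3 < n` and `n ≥ m^6`, then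
`τ(M,G) ≤ 5 n^{2/3}`. -/
theorem gallai_stmt1 {V W F : Type*} [Fintype V] [Fintype W] [Fintype F]
    (M : Multigraph W F) (hM : M.Connected) (G : SimpleGraph V)
    (hpi : PairwiseIntersectingIn M G ⊤)
    (hn : (Fintype.card F) ^ 3 < Fintype.card V)
    (hn6 : (Fintype.card F) ^ 6 ≤ Fintype.card V) :
    ∃ S : Set V, IsTransversalIn M G ⊤ S ∧
      (S.ncard : ℝ) ≤ 5 * (Fintype.card V : ℝ) ^ ((2 : ℝ) / 3) := by
  simpa only [max_eq_left (sq_le_rpow_two_thirds hn.le)] using gallai_stmt1_general M hM G hpi
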